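/- Let u, v ∈ B_n be positive, palindromic-free, ε-twisted conjugated braids of minimal canonical length in their ε-twisted conjugacy class, with ℓ(u) = ℓ(v) = r (minimality meaning: no positive palindromic-free braid ε-twisted conjugated to u satisfies ℓ ≤ r−1). Then there exist k ∈ ℕ and a chain u = u_0, u_1, …, u_k = v of positive, palindromic-free braids with ℓ(u_i) = r for all i, such that u_{i−1} is simply ε-twisted conjugated to u_i for i = 1,…,k. -/

import Mathlib

/-!
Order `B n` by left divisibility: `x ≤ y` when `x⁻¹ * y` is positive. Garside's theory makes this a
meet-semilattice on which right multiplication by powers of `Δ` acts by monotone shifts. It is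
developed here from the presentation: the reduction lemma for simply laced Artin monoids without
triangles (`tails_of_rel`) gives left cancellation and greatest common divisors, the half twist
flips the generators (`mul_half`), so its square is central, and hence the positive braid monoid
embeds in the braid group (`toB_injective`). The meets follow (`exists_meet`).

Fix `u`. A braid `z` is viewed as a position, carrying the braid `val rev u z = rev z * u * z`. Put
`θ z = u⁻¹ * (rev z)⁻¹`; this is an order-reversing bijection with `θ (z * Δ ^ k) = θ z * Δ ^ (-k)`.
The braid at `z` is positive iff `θ z ≤ z`, and it is moreover palindromic-free iff `z` is minimal
with this property (`minimal_iff`). It divides `Δ ^ r` iff `z ≤ θ z * Δ ^ r`. Call `z` good if it is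
such a minimal position and its braid divides `Δ ^ r`.

The rest is an argument about a meet-semilattice with shifts and such a `θ` (`TwistedOrder`).
Say that `x` and `y` are at distance at most `m` if `x ≤ y * Δ ^ m` and `y ≤ x * Δ ^ m`. For
minimal positions one of the two inequalities implies the other (`dist_symm`). If `z₁` and `z₂` are
good, at distance at most `h + 1` with `h ≥ 1`, then the position `(z₁ ⊓ z₂) * Δ ^ h` satisfies
`θ z ≤ z`, and `θ ∘ θ` moves it by at most `r` shifts. Repeatedly replacing such a `z` by
`z ⊓ (θ z * Δ ^ R)` for decreasing `R ≥ r` (`reduce_step`) leads to a position below it whose braid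
divides `Δ ^ r`, and a minimal position below that one is good and within `h` of both `z₁` and
`z₂`. So any two good positions are joined by good positions with consecutive distances at most one
(`chain`). Two positions `a`, `b` at distance at most one are moved to `a * Δ ⊓ b * Δ` by simple
elements, so their braids are simply twisted conjugated (`exists_simple`).

For `r ≥ 1` a positive palindromic-free braid has canonical length at most `r` iff it divides
`Δ ^ r`, because it is equal to `Δ` as soon as it is divisible by `Δ`; minimality of `r` then makes
the canonical lengths along the chain equal to `r`. For `r = 0` the braids `u` and `v` lie in
`{1, Δ}`, and since their exponent sums have the same parity they are equal.
-/

def braidRels (m : ℕ) : Set (FreeGroup (Fin m)) :=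
  { r | (∃ i j : Fin m, (i : ℕ) + 1 < (j : ℕ) ∧
          r = FreeGroup.of i * FreeGroup.of j * (FreeGroup.of i)⁻¹ * (FreeGroup.of j)⁻¹) ∨
        (∃ i j : Fin m, (i : ℕ) + 1 = (j : ℕ) ∧
          r = FreeGroup.of i * FreeGroup.of j * FreeGroup.of i *
              (FreeGroup.of j)⁻¹ * (FreeGroup.of i)⁻¹ * (FreeGroup.of j)⁻¹) }

/-- The braid group on `n` strands. -/
abbrev B (n : ℕ) := PresentedGroup (braidRels (n - 1))

/-- The Artin generators. -/
def σ {n : ℕ} (i : Fin (n - 1)) : B n := PresentedGroup.of i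

/-- Evaluation of a signed word in the generators. -/
def π {n : ℕ} (w : List (Fin (n - 1) × Bool)) : B n :=
  (w.map (fun p => if p.2 then σ p.1 else (σ p.1)⁻¹)).prod

/-- The submonoid of positive braids. -/
def P (n : ℕ) : Submonoid (B n) := Submonoid.closure (Set.range (σ (n := n)))

def σ' {n : ℕ} (j : ℕ) : B n := if h : j < n - 1 then σ ⟨j, h⟩ else 1

/-- The Garside half-twist element Δ. -/
def Δ (n : ℕ) : B n :=
  ((List.range (n - 1)).map
    (fun k => (((List.range (k + 1)).reverse).map (σ' (n := n))).prod)).prod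

/-- Simple elements: positive prefixes of Δ. -/
def Simple {n : ℕ} (s : B n) : Prop := s ∈ P n ∧ s⁻¹ * Δ n ∈ P n

/-- Palindromic-free positive braids. -/
def PalFree {n : ℕ} (x : B n) : Prop :=
  ∀ i : Fin (n - 1), (σ i)⁻¹ * x * (σ i)⁻¹ ∉ P n

/-- Canonical length at most `m`. -/
def lenLE {n : ℕ} (x : B n) (m : ℕ) : Prop :=
  ∃ p : ℤ, (Δ n) ^ (-p) * x ∈ P n ∧ x⁻¹ * (Δ n) ^ (p + (m : ℤ)) ∈ P n

/-- Canonical length exactly `m`. -/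
def lenEQ {n : ℕ} (x : B n) (m : ℕ) : Prop :=
  lenLE x m ∧ (1 ≤ m → ¬ lenLE x (m - 1))

/-- Left normal form (as a list of simple factors). -/
def IsLeftNF {n : ℕ} (x : B n) (L : List (B n)) : Prop :=
  (∀ s ∈ L, Simple s ∧ s ≠ 1) ∧ L.prod = x ∧
  ∀ i : ℕ, i + 1 < L.length → ∀ u : B n, Simple u →
    u⁻¹ * (L.getD i 1 * L.getD (i + 1) 1) ∈ P n → u⁻¹ * L.getD i 1 ∈ P n

/-- Right normal form (as a list of simple factors). -/
def IsRightNF {n : ℕ} (x : B n) (L : List (B n)) : Prop :=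
  (∀ s ∈ L, Simple s ∧ s ≠ 1) ∧ L.prod = x ∧
  ∀ i : ℕ, i + 1 < L.length → ∀ u : B n, Simple u →
    (L.getD i 1 * L.getD (i + 1) 1) * u⁻¹ ∈ P n → L.getD (i + 1) 1 * u⁻¹ ∈ P n

namespace BraidMonoid

/-! ### Simply laced Artin monoids and the reduction lemma -/

section Artin

variable {α : Type*} (adj : α → α → Prop)

open Classical in
/-- The complement `s \ t`: the shortest word with `s * (s \ t) = t * (t \ s)`. -/
noncomputable def compl (s t : α) : FreeMonoid α :=
  if s = t then 1 else if adj s t then FreeMonoid.of t * FreeMonoid.of s else FreeMonoid.of t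

/-- The defining relations of the simply laced Artin monoid of the graph `adj`. -/
inductive Rel : FreeMonoid α → FreeMonoid α → Prop
  | mk (s t : α) : Rel (FreeMonoid.of s * compl adj s t) (FreeMonoid.of t * compl adj t s)

/-- The simply laced Artin monoid of the graph `adj`. -/
abbrev Mon := (conGen (Rel adj)).Quotient

/-- The class of a positive word. -/
def cls : FreeMonoid α →* Mon adj := (conGen (Rel adj)).mk'

/-- The generators of the Artin monoid. -/
def gen (s : α) : Mon adj := cls adj (FreeMonoid.of s)

/-- The class of the complement `s \ t`. -/
noncomputable def co (s t : α) : Mon adj := cls adj (compl adj s t)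

variable {adj}

theorem co_self (s : α) : co adj s s = 1 := by simp [co, compl]

theorem co_adj {s t : α} (h : s ≠ t) (ha : adj s t) : co adj s t = gen adj t * gen adj s := by
  simp [co, compl, h, ha, gen]

theorem co_not_adj {s t : α} (h : s ≠ t) (ha : ¬ adj s t) : co adj s t = gen adj t := by
  simp [co, compl, h, ha, gen]

theorem gen_mul_co (s t : α) : gen adj s * co adj s t = gen adj t * co adj t s := by
  simp only [gen, co, ← map_mul]
  exact (Con.eq _).2 (ConGen.Rel.of _ _ (Rel.mk s t))

theorem cls_surjective : Function.Surjective (cls adj) := Con.mk'_surjective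

theorem compl_length (hsym : ∀ s t, adj s t → adj t s) (s t : α) :
    (compl adj s t).length = (compl adj t s).length := by
  unfold compl
  by_cases h : s = t
  · simp [h]
  · have h' : ¬ t = s := fun e => h e.symm
    by_cases ha : adj s t
    · simp [h, h', ha, hsym s t ha]
    · have ha' : ¬ adj t s := fun e => ha (hsym _ _ e)
      simp [h, h', ha, ha']

theorem conGen_length (hsym : ∀ s t, adj s t → adj t s) {x y : FreeMonoid α}
    (h : ConGen.Rel (Rel adj) x y) : x.length = y.length := by
  induction h with
  | of _ _ h => obtain ⟨s, t⟩ := h; simp [compl_length hsym s t]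
  | refl => rfl
  | symm _ ih => exact ih.symm
  | trans _ _ ih1 ih2 => exact ih1.trans ih2
  | mul _ _ ih1 ih2 => simp [ih1, ih2]

/-- Word length descends to the Artin monoid. -/
theorem exists_len (hsym : ∀ s t, adj s t → adj t s) :
    ∃ len : Mon adj → ℕ, len 1 = 0 ∧ (∀ s, len (gen adj s) = 1) ∧
      ∀ x y, len (x * y) = len x + len y := by
  let f : Mon adj → ℕ := fun x => Con.liftOn x FreeMonoid.length
    (fun _ _ h => conGen_length hsym h)
  have hf : ∀ w, f (cls adj w) = w.length := fun _ => rfl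
  refine ⟨f, ?_, ?_, ?_⟩
  · rw [← map_one (cls adj), hf]; rfl
  · intro s; rw [gen, hf]; rfl
  · intro x y
    obtain ⟨x, rfl⟩ := cls_surjective x
    obtain ⟨y, rfl⟩ := cls_surjective y
    rw [← map_mul, hf, hf, hf, FreeMonoid.length_mul]

theorem braid {s t : α} (hsym : ∀ s t, adj s t → adj t s) (h : s ≠ t) (ha : adj s t)
    (Z : Mon adj) :
    gen adj s * (gen adj t * (gen adj s * Z)) = gen adj t * (gen adj s * (gen adj t * Z)) := by
  have := gen_mul_co (adj := adj) s t
  rw [co_adj h ha, co_adj h.symm (hsym _ _ ha)] at this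
  simpa only [mul_assoc] using congrArg (· * Z) this

theorem comm {s t : α} (hsym : ∀ s t, adj s t → adj t s) (h : s ≠ t) (ha : ¬ adj s t)
    (Z : Mon adj) :
    gen adj s * (gen adj t * Z) = gen adj t * (gen adj s * Z) := by
  have := gen_mul_co (adj := adj) s t
  rw [co_not_adj h ha, co_not_adj h.symm (fun e => ha (hsym _ _ e))] at this
  simpa only [mul_assoc] using congrArg (· * Z) this

/-- `X` and `Y` are the tails of a common multiple of `s` and `t` that factors through
`s * (s \ t) = t * (t \ s)`. -/
def Tails (s t : α) (X Y : Mon adj) : Prop := ∃ W, X = co adj s t * W ∧ Y = co adj t s * W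

theorem Tails.symm {s t : α} {X Y : Mon adj} (h : Tails s t X Y) : Tails t s Y X := by
  obtain ⟨W, h1, h2⟩ := h
  exact ⟨W, h2, h1⟩

/-- The cube condition on generators, in inductive form: if the reduction property holds below
length `K`, then `Tails` is transitive at length `K`. -/
theorem tails_trans (hsym : ∀ s t, adj s t → adj t s)
    (htri : ∀ s t u, adj s t → adj t u → adj s u → False)
    {len : Mon adj → ℕ} (hg : ∀ s, len (gen adj s) = 1)
    (hm : ∀ x y, len (x * y) = len x + len y) {K : ℕ}
    (H : ∀ s t (X Y : Mon adj), len X < K → gen adj s * X = gen adj t * Y → Tails s t X Y)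
    {s t u : α} {X Y Z : Mon adj} (hY : len Y ≤ K)
    (h1 : Tails s t X Y) (h2 : Tails t u Y Z) : Tails s u X Z := by
  have cancel : ∀ s (X Y : Mon adj), len X < K → gen adj s * X = gen adj s * Y → X = Y := by
    intro s X Y hX h
    obtain ⟨W, h1, h2⟩ := H s s X Y hX h
    rw [h1, h2]
  obtain ⟨W, rfl, rfl⟩ := h1
  obtain ⟨V, hV, rfl⟩ := h2
  by_cases est : s = t
  · subst est; simp only [co_self, one_mul] at *; exact ⟨V, hV, rfl⟩
  by_cases etu : t = u
  · subst etu; simp only [co_self, one_mul] at *; exact ⟨W, rfl, hV.symm⟩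
  have ets : t ≠ s := fun e => est e.symm
  have eut : u ≠ t := fun e => etu e.symm
  by_cases esu : s = u
  · subst esu
    refine ⟨co adj s t * W, by rw [co_self, one_mul], ?_⟩
    rw [co_self, one_mul]
    have : W = V := by
      by_cases ha : adj t s
      · rw [co_adj ets ha] at hV hY
        simp only [mul_assoc, hm, hg] at hV hY
        exact cancel t _ _ (by omega) (cancel s _ _ (by simp only [hm, hg]; omega) hV)
      · rw [co_not_adj ets ha] at hV hY
        simp only [hm, hg] at hY
        exact cancel s _ _ (by omega) hV
    rw [this]
  have eus : u ≠ s := fun e => esu e.symm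
  by_cases ast : adj s t <;> by_cases atu : adj t u <;> by_cases asu : adj s u
  · exact (htri _ _ _ ast atu asu).elim
  · -- `t` is the middle vertex of the path `s - t - u`
    have ats := hsym _ _ ast
    have aut := hsym _ _ atu
    have aus : ¬ adj u s := fun e => asu (hsym _ _ e)
    rw [co_adj ets ats] at hV hY
    rw [co_adj etu atu] at hV
    simp only [mul_assoc, hm, hg] at hV hY
    obtain ⟨Q, hQ1, hQ2⟩ := H _ _ _ _ (by simp only [hm, hg]; omega) hV
    rw [co_not_adj esu asu] at hQ1
    rw [co_not_adj eus aus] at hQ2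
    have l1 := congrArg len hQ1
    have l2 := congrArg len hQ2
    simp only [hm, hg] at l1 l2
    obtain ⟨A, hA1, hA2⟩ := H _ _ _ _ (by omega) hQ1
    obtain ⟨A', hB1, hB2⟩ := H _ _ _ _ (by omega) hQ2
    rw [co_adj etu atu, mul_assoc] at hA1
    rw [co_adj eut aut, mul_assoc] at hA2
    rw [co_adj ets ats, mul_assoc] at hB1
    rw [co_adj est ast, mul_assoc] at hB2
    have l3 := congrArg len hA2
    simp only [hm, hg] at l3
    have e1 := cancel t _ _ (by simp only [hm, hg]; omega) (hA2.symm.trans hB2)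
    obtain ⟨C, hC1, hC2⟩ := H _ _ _ _ (by omega) e1
    rw [co_not_adj eus aus] at hC1
    rw [co_not_adj esu asu] at hC2
    refine ⟨gen adj t * (gen adj u * (gen adj s * (gen adj t * C))), ?_, ?_⟩
    · rw [co_adj est ast, co_not_adj esu asu, hA1, hC1]
      simp only [mul_assoc]
      rw [comm hsym esu asu, ← braid hsym ets ats, braid hsym etu atu]
    · rw [co_adj eut aut, co_not_adj eus aus, hB1, hC2]
      simp only [mul_assoc]
      rw [comm hsym eus aus, ← braid hsym etu atu, braid hsym ets ats, comm hsym esu asu]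
  · -- `s` is the middle vertex of the path `t - s - u`
    have ats := hsym _ _ ast
    have aus := hsym _ _ asu
    have aut : ¬ adj u t := fun e => atu (hsym _ _ e)
    rw [co_adj ets ats] at hV hY
    rw [co_not_adj etu atu] at hV
    simp only [mul_assoc, hm, hg] at hV hY
    obtain ⟨Q, hQ1, hQ2⟩ := H _ _ _ _ (by simp only [hm, hg]; omega) hV
    rw [co_adj esu asu, mul_assoc] at hQ1
    rw [co_adj eus aus, mul_assoc] at hQ2
    have l1 := congrArg len hQ1
    simp only [hm, hg] at l1
    obtain ⟨A, hA1, hA2⟩ := H _ _ _ _ (by omega) hQ1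
    rw [co_not_adj etu atu] at hA1
    rw [co_not_adj eut aut] at hA2
    obtain ⟨C, hC1, hC2⟩ := H _ _ _ _ (by omega) hA2
    rw [co_adj est ast, mul_assoc] at hC1
    rw [co_adj ets ats, mul_assoc] at hC2
    refine ⟨gen adj t * (gen adj s * (gen adj u * C)), ?_, ?_⟩
    · rw [co_adj est ast, co_adj esu asu, hA1, hC2]
      simp only [mul_assoc]
      rw [braid hsym esu asu, comm hsym eut aut, comm hsym etu atu, braid hsym ets ats]
    · rw [co_not_adj eut aut, co_adj eus aus, hQ2, hC1]
      simp only [mul_assoc]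
      rw [comm hsym eut aut, braid hsym ets ats, braid hsym esu asu, comm hsym etu atu]
  · -- only `s` and `t` are adjacent
    have ats := hsym _ _ ast
    have aus : ¬ adj u s := fun e => asu (hsym _ _ e)
    have aut : ¬ adj u t := fun e => atu (hsym _ _ e)
    rw [co_adj ets ats] at hV hY
    rw [co_not_adj etu atu] at hV
    simp only [mul_assoc, hm, hg] at hV hY
    obtain ⟨Q, hQ1, hQ2⟩ := H _ _ _ _ (by simp only [hm, hg]; omega) hV
    rw [co_not_adj esu asu] at hQ1
    rw [co_not_adj eus aus] at hQ2
    obtain ⟨A, hA1, hA2⟩ := H _ _ _ _ (by omega) hQ1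
    rw [co_not_adj etu atu] at hA1
    rw [co_not_adj eut aut] at hA2
    refine ⟨gen adj t * (gen adj s * A), ?_, ?_⟩
    · rw [co_adj est ast, co_not_adj esu asu, hA1]
      simp only [mul_assoc]
      rw [comm hsym esu asu, comm hsym etu atu]
    · rw [co_not_adj eut aut, co_not_adj eus aus, hQ2, hA2]
      exact braid hsym ets ats _
  · -- `u` is the middle vertex of the path `s - u - t`
    have aut := hsym _ _ atu
    have aus := hsym _ _ asu
    have ats : ¬ adj t s := fun e => ast (hsym _ _ e)
    rw [co_not_adj ets ats] at hV hY
    rw [co_adj etu atu] at hV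
    simp only [mul_assoc, hm, hg] at hV hY
    obtain ⟨Q, hQ1, hQ2⟩ := H _ _ _ _ (by omega) hV
    rw [co_adj esu asu, mul_assoc] at hQ1
    rw [co_adj eus aus, mul_assoc] at hQ2
    have l1 := congrArg len hQ1
    have l2 := congrArg len hQ2
    have l3 := congrArg len hV
    simp only [hm, hg] at l1 l2 l3
    obtain ⟨A, hA1, hA2⟩ := H _ _ _ _ (by omega) hQ2
    rw [co_not_adj ets ats] at hA1
    rw [co_not_adj est ast] at hA2
    obtain ⟨C, hC1, hC2⟩ := H _ _ _ _ (by omega) hA2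
    rw [co_adj eut aut, mul_assoc] at hC1
    rw [co_adj etu atu, mul_assoc] at hC2
    refine ⟨gen adj t * (gen adj u * (gen adj s * C)), ?_, ?_⟩
    · rw [co_not_adj est ast, co_adj esu asu, hQ1, hC1]
      simp only [mul_assoc]
      rw [comm hsym est ast, braid hsym etu atu, braid hsym eus aus, comm hsym ets ats]
    · rw [co_adj eut aut, co_adj eus aus, hA1, hC2]
      simp only [mul_assoc]
      rw [braid hsym eus aus, comm hsym est ast, comm hsym ets ats, braid hsym etu atu]
  · -- only `t` and `u` are adjacent
    have aut := hsym _ _ atu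
    have aus : ¬ adj u s := fun e => asu (hsym _ _ e)
    have ats : ¬ adj t s := fun e => ast (hsym _ _ e)
    rw [co_not_adj ets ats] at hV hY
    rw [co_adj etu atu] at hV
    simp only [mul_assoc, hm, hg] at hV hY
    obtain ⟨Q, hQ1, hQ2⟩ := H _ _ _ _ (by omega) hV
    rw [co_not_adj esu asu] at hQ1
    rw [co_not_adj eus aus] at hQ2
    have l3 := congrArg len hV
    simp only [hm, hg] at l3
    obtain ⟨A, hA1, hA2⟩ := H _ _ _ _ (by omega) hQ2
    rw [co_not_adj ets ats] at hA1
    rw [co_not_adj est ast] at hA2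
    refine ⟨gen adj t * (gen adj u * A), ?_, ?_⟩
    · rw [co_not_adj est ast, co_not_adj esu asu, hQ1, hA2]
      exact braid hsym etu atu _
    · rw [co_adj eut aut, co_not_adj eus aus, hA1]
      simp only [mul_assoc]
      rw [comm hsym eus aus, comm hsym ets ats]
  · -- only `s` and `u` are adjacent
    have aus := hsym _ _ asu
    have aut : ¬ adj u t := fun e => atu (hsym _ _ e)
    have ats : ¬ adj t s := fun e => ast (hsym _ _ e)
    rw [co_not_adj ets ats] at hV hY
    rw [co_not_adj etu atu] at hV
    simp only [hm, hg] at hY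
    obtain ⟨Q, hQ1, hQ2⟩ := H _ _ _ _ (by omega) hV
    rw [co_adj esu asu, mul_assoc] at hQ1
    rw [co_adj eus aus, mul_assoc] at hQ2
    refine ⟨gen adj t * Q, ?_, ?_⟩
    · rw [co_not_adj est ast, co_adj esu asu, hQ1]
      simp only [mul_assoc]
      rw [comm hsym etu atu, comm hsym ets ats]
    · rw [co_not_adj eut aut, co_adj eus aus, hQ2]
      simp only [mul_assoc]
      rw [comm hsym ets ats, comm hsym etu atu]
  · -- `s`, `t`, `u` pairwise commute
    have aus : ¬ adj u s := fun e => asu (hsym _ _ e)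
    have aut : ¬ adj u t := fun e => atu (hsym _ _ e)
    have ats : ¬ adj t s := fun e => ast (hsym _ _ e)
    rw [co_not_adj ets ats] at hV hY
    rw [co_not_adj etu atu] at hV
    simp only [hm, hg] at hY
    obtain ⟨Q, hQ1, hQ2⟩ := H _ _ _ _ (by omega) hV
    rw [co_not_adj esu asu] at hQ1
    rw [co_not_adj eus aus] at hQ2
    refine ⟨gen adj t * Q, ?_, ?_⟩
    · rw [co_not_adj est ast, co_not_adj esu asu, hQ1, comm hsym etu atu]
    · rw [co_not_adj eut aut, co_not_adj eus aus, hQ2, comm hsym ets ats]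

theorem of_mul_inj {s t : α} {X Y : FreeMonoid α}
    (h : FreeMonoid.of s * X = FreeMonoid.of t * Y) : s = t ∧ X = Y := List.cons.inj h

/-- Garside's reduction lemma at the level of words: induction on length, and for a fixed length
on the derivation witnessing the equality of the two words. -/
theorem tails_of_rel (hsym : ∀ s t, adj s t → adj t s)
    (htri : ∀ s t u, adj s t → adj t u → adj s u → False)
    {len : Mon adj → ℕ} (h1 : len 1 = 0) (hg : ∀ s, len (gen adj s) = 1)
    (hm : ∀ x y, len (x * y) = len x + len y) (K : ℕ) :
    ∀ s t (X Y : Mon adj), len X < K → gen adj s * X = gen adj t * Y → Tails s t X Y := by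
  induction K with
  | zero => intro s t X Y h; omega
  | succ K H =>
    have hlen : ∀ w, len (cls adj w) = w.length := by
      intro w
      induction w using FreeMonoid.inductionOn' with
      | one => simpa using h1
      | of_mul a w ih =>
        rw [map_mul, hm, ih, FreeMonoid.length_mul]
        exact congrArg (· + w.length) (hg a)
    have key : ∀ x y, ConGen.Rel (Rel adj) x y → x.length ≤ K + 1 →
        ∀ s X t Y, x = FreeMonoid.of s * X → y = FreeMonoid.of t * Y →
          Tails s t (cls adj X) (cls adj Y) := by
      intro x y h
      induction h with
      | of x y h =>
        intro hK s X t Y hx hy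
        obtain ⟨a, b⟩ := h
        obtain ⟨rfl, rfl⟩ := of_mul_inj hx
        obtain ⟨rfl, rfl⟩ := of_mul_inj hy
        exact ⟨1, (mul_one _).symm, (mul_one _).symm⟩
      | refl x =>
        intro hK s X t Y hx hy
        rw [hx] at hy
        obtain ⟨rfl, rfl⟩ := of_mul_inj hy
        exact ⟨cls adj X, by rw [co_self, one_mul], by rw [co_self, one_mul]⟩
      | @symm x y h ih =>
        intro hK s X t Y hx hy
        exact (ih (by rw [conGen_length hsym h]; exact hK) t Y s X hy hx).symm
      | @trans x y z hxy hyz ih1 ih2 =>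
        intro hK s X t Y hx hy
        have e := conGen_length hsym hxy
        cases y using FreeMonoid.casesOn with
        | one => rw [hx] at e; simp at e
        | of_mul a Q =>
          refine tails_trans hsym htri hg hm H ?_ (ih1 hK s X a Q hx rfl)
            (ih2 (by omega) a Q t Y rfl hy)
          rw [hlen]
          rw [FreeMonoid.length_mul] at e
          have : (FreeMonoid.of a).length = 1 := rfl
          omega
      | @mul x x' y y' hx hy ih1 ih2 =>
        intro hK s X t Y e1 e2
        have e := conGen_length hsym hx
        rw [FreeMonoid.length_mul] at hK
        cases x using FreeMonoid.casesOn with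
        | one =>
          cases x' using FreeMonoid.casesOn with
          | one =>
            rw [one_mul] at e1 e2
            exact ih2 (by omega) s X t Y e1 e2
          | of_mul a Q => simp at e; omega
        | of_mul a Q =>
          cases x' using FreeMonoid.casesOn with
          | one => simp at e
          | of_mul a' Q' =>
            rw [mul_assoc] at e1 e2
            obtain ⟨rfl, rfl⟩ := of_mul_inj e1
            obtain ⟨rfl, rfl⟩ := of_mul_inj e2
            obtain ⟨W, hW1, hW2⟩ := ih1 (by omega) _ _ _ _ rfl rfl
            refine ⟨W * cls adj y, ?_, ?_⟩
            · change cls adj (Q * y) = _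
              rw [map_mul, hW1, mul_assoc]
            · change cls adj (Q' * y') = _
              have : cls adj y = cls adj y' := (Con.eq _).2 hy
              rw [map_mul, hW2, mul_assoc, this]
    intro s t X Y hX h
    obtain ⟨X, rfl⟩ := cls_surjective X
    obtain ⟨Y, rfl⟩ := cls_surjective Y
    rw [gen, gen, ← map_mul, ← map_mul] at h
    refine key _ _ ((Con.eq _).1 h) ?_ s X t Y rfl rfl
    rw [hlen] at hX
    rw [FreeMonoid.length_mul]
    have : (FreeMonoid.of s).length = 1 := rfl
    omega


theorem mon_induction {p : Mon adj → Prop} (h1 : p 1) (hs : ∀ s x, p x → p (gen adj s * x))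
    (x : Mon adj) : p x := by
  obtain ⟨w, rfl⟩ := cls_surjective x
  induction w using FreeMonoid.inductionOn' with
  | one => rwa [map_one]
  | of_mul a w ih => rw [map_mul]; exact hs a _ ih

/-- Data making the Artin monoid of `adj` a monoid with a length function satisfying Garside's
reduction lemma: a common multiple of `s` and `t` is a multiple of `s * (s \ t)`. -/
structure HasTails (adj : α → α → Prop) (len : Mon adj → ℕ) : Prop where
  len_one : len 1 = 0
  len_gen : ∀ s, len (gen adj s) = 1
  len_mul : ∀ x y, len (x * y) = len x + len y
  tails : ∀ s t (X Y : Mon adj), gen adj s * X = gen adj t * Y →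
    Tails s t X Y

theorem exists_hasTails (hsym : ∀ s t, adj s t → adj t s)
    (htri : ∀ s t u, adj s t → adj t u → adj s u → False) : ∃ len, HasTails adj len := by
  obtain ⟨len, h1, hg, hm⟩ := exists_len hsym
  exact ⟨len, h1, hg, hm, fun s t X Y => tails_of_rel hsym htri h1 hg hm (len X + 1) s t X Y
    (Nat.lt_succ_self _)⟩

variable {len : Mon adj → ℕ}

theorem HasTails.cancel (H : HasTails adj len) (a : Mon adj) :
    ∀ {x y : Mon adj}, a * x = a * y → x = y := by
  induction a using mon_induction with
  | h1 => intro x y h; simpa using h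
  | hs s a ih =>
    intro x y h
    rw [mul_assoc, mul_assoc] at h
    obtain ⟨W, h1, h2⟩ := H.tails _ _ _ _ h
    exact ih (h1.trans h2.symm)

theorem HasTails.dvd_cancel (H : HasTails adj len) {a x y : Mon adj} (h : a * x ∣ a * y) :
    x ∣ y := by
  obtain ⟨c, hc⟩ := h
  exact ⟨c, H.cancel a (by rw [hc, mul_assoc])⟩

theorem HasTails.eq_one (H : HasTails adj len) {x : Mon adj} (h : len x = 0) : x = 1 := by
  induction x using mon_induction with
  | h1 => rfl
  | hs s a ih => rw [H.len_mul, H.len_gen] at h; omega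

/-- Elements of the Artin monoid with a common right multiple have a least one. -/
theorem HasTails.exists_lcm (H : HasTails adj len) (K : ℕ) :
    ∀ a b m : Mon adj, len m ≤ K → a ∣ m → b ∣ m →
      ∃ l, a ∣ l ∧ b ∣ l ∧ ∀ m', a ∣ m' → b ∣ m' → l ∣ m' := by
  induction K using Nat.strong_induction_on with
  | _ K ih =>
    intro a b m hK ham hbm
    induction a using mon_induction with
    | h1 => exact ⟨b, one_dvd _, dvd_rfl, fun _ _ h => h⟩
    | hs s a _ =>
    induction b using mon_induction with
    | h1 => exact ⟨_, dvd_rfl, one_dvd _, fun _ h _ => h⟩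
    | hs t b _ =>
    -- the tails of a common multiple of `s * a` and `t * b`
    have tail : ∀ m, gen adj s * a ∣ m → gen adj t * b ∣ m →
        ∃ W, m = gen adj s * (co adj s t * W) ∧ a ∣ co adj s t * W ∧ b ∣ co adj t s * W := by
      rintro m ⟨x, rfl⟩ ⟨y, hy⟩
      rw [mul_assoc, mul_assoc] at hy
      obtain ⟨W, h1, h2⟩ := H.tails _ _ _ _ hy
      exact ⟨W, by rw [mul_assoc, h1], ⟨x, h1.symm⟩, ⟨y, h2.symm⟩⟩
    obtain ⟨W, hm, hx, hy⟩ := tail m ham hbm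
    have l1 : len m = 1 + len (co adj s t * W) := by rw [hm, H.len_mul, H.len_gen]
    have l2 : len m = 1 + len (co adj t s * W) := by
      rw [hm, ← mul_assoc, gen_mul_co, mul_assoc, H.len_mul, H.len_gen]
    have l3 := H.len_mul (co adj s t) W
    obtain ⟨p, hap, ⟨p', rfl⟩, hp⟩ := ih _ (by omega) a (co adj s t) _ le_rfl hx ⟨W, rfl⟩
    obtain ⟨q, hbq, ⟨q', rfl⟩, hq⟩ := ih _ (by omega) b (co adj t s) _ le_rfl hy ⟨W, rfl⟩
    obtain ⟨l, hpl, hql, hl⟩ := ih _ (by omega) p' q' W le_rfl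
      (H.dvd_cancel (hp _ hx ⟨W, rfl⟩)) (H.dvd_cancel (hq _ hy ⟨W, rfl⟩))
    refine ⟨gen adj s * (co adj s t * l), ?_, ?_, ?_⟩
    · exact mul_dvd_mul_left _ (hap.trans (mul_dvd_mul_left _ hpl))
    · rw [← mul_assoc, gen_mul_co, mul_assoc]
      exact mul_dvd_mul_left _ (hbq.trans (mul_dvd_mul_left _ hql))
    · intro m' h1 h2
      obtain ⟨W', rfl, hx', hy'⟩ := tail m' h1 h2
      exact mul_dvd_mul_left _ (mul_dvd_mul_left _ (hl _
        (H.dvd_cancel (hp _ hx' ⟨W', rfl⟩)) (H.dvd_cancel (hq _ hy' ⟨W', rfl⟩))))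

/-- Any two elements of the Artin monoid have a greatest common left divisor: a common divisor of
maximal length. -/
theorem HasTails.exists_gcd (H : HasTails adj len) (a b : Mon adj) :
    ∃ d, d ∣ a ∧ d ∣ b ∧ ∀ e, e ∣ a → e ∣ b → e ∣ d := by
  classical
  let Q : ℕ → Prop := fun k => ∃ d, d ∣ a ∧ d ∣ b ∧ len d = k
  have hb : ∀ k, Q k → k ≤ len a := by
    rintro k ⟨d, ⟨c, rfl⟩, -, rfl⟩
    rw [H.len_mul]; omega
  have h0 : Q 0 := ⟨1, one_dvd _, one_dvd _, H.len_one⟩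
  obtain ⟨d, hda, hdb, hd⟩ : Q (Nat.findGreatest Q (len a)) :=
    Nat.findGreatest_spec (P := Q) (Nat.zero_le _) h0
  refine ⟨d, hda, hdb, fun e hea heb => ?_⟩
  obtain ⟨l, ⟨c, rfl⟩, hel, hl⟩ := H.exists_lcm _ d e a le_rfl hda hea
  have h := hl a hda hea
  have hQ : Q (len (d * c)) := ⟨_, h, hl b hdb heb, rfl⟩
  have := Nat.le_findGreatest (hb _ hQ) hQ
  rw [← hd, H.len_mul] at this
  rw [H.eq_one (x := c) (by omega), mul_one] at hel
  exact hel

end Artin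
end BraidMonoid

namespace BraidMonoid

/-! ### The half twist -/

section HalfTwist

variable {G : Type*} [Monoid G] (s : ℕ → G)

/-- The descending product `s (k-1) * ⋯ * s 0`. -/
def desc : ℕ → G
  | 0 => 1
  | k + 1 => s k * desc k

/-- The ascending product `s 0 * ⋯ * s (k-1)`. -/
def asc : ℕ → G
  | 0 => 1
  | k + 1 => asc k * s k

/-- The half twist on the first `k` letters: `desc 1 * desc 2 * ⋯ * desc k`. -/
def half : ℕ → G
  | 0 => 1
  | k + 1 => half k * desc s (k + 1)

variable {s} {m : ℕ}

theorem desc_comm (hc : ∀ i j, i + 1 < j → s i * s j = s j * s i) {k j : ℕ} (h : k < j) :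
    s j * desc s k = desc s k * s j := by
  induction k with
  | zero => simp [desc]
  | succ k ih =>
    simp only [desc]
    rw [← mul_assoc, ← hc k j h, mul_assoc, ih (by omega), mul_assoc]

theorem asc_comm (hc : ∀ i j, i + 1 < j → s i * s j = s j * s i) {k j : ℕ} (h : k < j) :
    s j * asc s k = asc s k * s j := by
  induction k with
  | zero => simp [asc]
  | succ k ih =>
    simp only [asc]
    rw [← mul_assoc, ih (by omega), mul_assoc, ← hc k j h, mul_assoc]

theorem half_comm (hc : ∀ i j, i + 1 < j → s i * s j = s j * s i) {k j : ℕ} (h : k < j) :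
    s j * half s k = half s k * s j := by
  induction k with
  | zero => simp [half]
  | succ k ih =>
    simp only [half]
    rw [← mul_assoc, ih (by omega), mul_assoc, desc_comm hc h, mul_assoc]

theorem half_succ' (hc : ∀ i j, i + 1 < j → s i * s j = s j * s i) (k : ℕ) :
    half s (k + 1) = asc s (k + 1) * half s k := by
  induction k with
  | zero => simp [half, asc, desc]
  | succ k ih =>
    calc half s (k + 2) = half s (k + 1) * desc s (k + 2) := rfl
      _ = asc s (k + 1) * (half s k * s (k + 1)) * desc s (k + 1) := by
        rw [ih, desc]; simp only [mul_assoc]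
      _ = asc s (k + 2) * half s (k + 1) := by
        rw [← half_comm hc (show k < k + 1 by omega), half]; simp only [asc, mul_assoc]

theorem mul_desc (hc : ∀ i j, i + 1 < j → s i * s j = s j * s i)
    (hb : ∀ i, i + 1 < m → s i * s (i + 1) * s i = s (i + 1) * s i * s (i + 1)) {k i : ℕ}
    (hi : i + 1 < k) (hk : k ≤ m) : s i * desc s k = desc s k * s (i + 1) := by
  induction k with
  | zero => omega
  | succ k ih =>
    rcases Nat.lt_or_ge (i + 1) k with h | h
    · simp only [desc]
      rw [← mul_assoc, hc i k h, mul_assoc, ih h (by omega), mul_assoc]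
    · obtain rfl : k = i + 1 := by omega
      simp only [desc, mul_assoc]
      rw [← desc_comm hc (Nat.lt_succ_self i)]
      simp only [← mul_assoc]
      rw [hb i (by omega)]

theorem mul_asc (hc : ∀ i j, i + 1 < j → s i * s j = s j * s i)
    (hb : ∀ i, i + 1 < m → s i * s (i + 1) * s i = s (i + 1) * s i * s (i + 1)) {k i : ℕ}
    (hi : i + 1 < k) (hk : k ≤ m) : s (i + 1) * asc s k = asc s k * s i := by
  induction k with
  | zero => omega
  | succ k ih =>
    rcases Nat.lt_or_ge (i + 1) k with h | h
    · simp only [asc]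
      rw [← mul_assoc, ih h (by omega), mul_assoc, hc i k h, mul_assoc]
    · obtain rfl : k = i + 1 := by omega
      simp only [asc]
      rw [← mul_assoc, ← mul_assoc, asc_comm hc (Nat.lt_succ_self i)]
      have := hb i (by omega)
      simp only [mul_assoc] at this ⊢
      rw [this]

/-- Conjugation by the half twist flips the generators. -/
theorem mul_half (hc : ∀ i j, i + 1 < j → s i * s j = s j * s i)
    (hb : ∀ i, i + 1 < m → s i * s (i + 1) * s i = s (i + 1) * s i * s (i + 1)) {k : ℕ} :
    ∀ {i j : ℕ}, i + j + 1 = k → k ≤ m → s i * half s k = half s k * s j := by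
  induction k with
  | zero => intro i j h; omega
  | succ k ih =>
    intro i j h hk
    cases j with
    | succ j =>
      rw [half, ← mul_assoc, ih (i := i) (j := j) (by omega) (by omega), mul_assoc,
        mul_desc hc hb (by omega) hk, mul_assoc]
    | zero =>
      obtain rfl : i = k := by omega
      cases i with
      | zero => simp [half, desc]
      | succ i =>
        rw [half_succ' hc, ← mul_assoc, mul_asc hc hb (by omega) hk, mul_assoc,
          ih (i := i) (j := 0) (by omega) (by omega), mul_assoc]

theorem desc_mem {S : Submonoid G} (hS : ∀ i, s i ∈ S) (k : ℕ) : desc s k ∈ S := by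
  induction k with
  | zero => exact S.one_mem
  | succ k ih => exact S.mul_mem (hS k) ih

theorem asc_mem {S : Submonoid G} (hS : ∀ i, s i ∈ S) (k : ℕ) : asc s k ∈ S := by
  induction k with
  | zero => exact S.one_mem
  | succ k ih => exact S.mul_mem ih (hS k)

theorem half_mem {S : Submonoid G} (hS : ∀ i, s i ∈ S) (k : ℕ) : half s k ∈ S := by
  induction k with
  | zero => exact S.one_mem
  | succ k ih => exact S.mul_mem ih (desc_mem hS _)

/-- Every generator left-divides the half twist. -/
theorem exists_half_eq_mul (hc : ∀ i j, i + 1 < j → s i * s j = s j * s i)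
    (hb : ∀ i, i + 1 < m → s i * s (i + 1) * s i = s (i + 1) * s i * s (i + 1))
    {S : Submonoid G} (hS : ∀ i, s i ∈ S) {k : ℕ} :
    ∀ {i : ℕ}, i < k → k ≤ m → ∃ x ∈ S, half s k = s i * x := by
  induction k with
  | zero => intro i h; omega
  | succ k ih =>
    intro i hi hk
    rcases Nat.lt_or_ge i k with h | h
    · obtain ⟨x, hx, e⟩ := ih h (by omega)
      exact ⟨x * desc s (k + 1), S.mul_mem hx (desc_mem hS _), by rw [half, e, mul_assoc]⟩
    · obtain rfl : i = k := by omega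
      -- `desc (i+1)` starts with `s i` and half-commutes with all of `half i`
      have h1 : ∀ j ≤ i, ∃ x ∈ S, desc s j * desc s (i + 1) = desc s (i + 1) * x := by
        intro j
        induction j with
        | zero => intro _; exact ⟨1, S.one_mem, by simp [desc]⟩
        | succ j ih =>
          intro hj
          obtain ⟨x, hx, e⟩ := ih (by omega)
          refine ⟨s (j + 1) * x, S.mul_mem (hS _) hx, ?_⟩
          rw [desc, mul_assoc, e, ← mul_assoc, mul_desc hc hb (by omega) hk, mul_assoc]
      have h2 : ∀ j ≤ i, ∃ x ∈ S, half s j * desc s (i + 1) = desc s (i + 1) * x := by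
        intro j
        induction j with
        | zero => intro _; exact ⟨1, S.one_mem, by simp [half]⟩
        | succ j ih =>
          intro hj
          obtain ⟨x, hx, e⟩ := ih (by omega)
          obtain ⟨y, hy, e'⟩ := h1 (j + 1) hj
          refine ⟨x * y, S.mul_mem hx hy, ?_⟩
          rw [half, mul_assoc, e', ← mul_assoc, e, mul_assoc]
      obtain ⟨x, hx, e⟩ := h2 i le_rfl
      exact ⟨desc s i * x, S.mul_mem (desc_mem hS _) hx, by rw [half, e, desc, mul_assoc]⟩

/-- On at least two letters the half twist both starts and ends with `s 0`, disjointly. -/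
theorem exists_half_eq_mul_mul (hc : ∀ i j, i + 1 < j → s i * s j = s j * s i)
    {S : Submonoid G} (hS : ∀ i, s i ∈ S) (k : ℕ) :
    ∃ x ∈ S, half s (k + 2) = s 0 * x * s 0 := by
  have h1 : ∀ k, ∃ x ∈ S, asc s (k + 1) = s 0 * x := by
    intro k
    induction k with
    | zero => exact ⟨1, S.one_mem, by simp [asc]⟩
    | succ k ih =>
      obtain ⟨x, hx, e⟩ := ih
      exact ⟨x * s (k + 1), S.mul_mem hx (hS _), by rw [asc, e, mul_assoc]⟩
  have h2 : ∀ k, ∃ x ∈ S, desc s (k + 1) = x * s 0 := by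
    intro k
    induction k with
    | zero => exact ⟨1, S.one_mem, by simp [desc]⟩
    | succ k ih =>
      obtain ⟨x, hx, e⟩ := ih
      exact ⟨s (k + 1) * x, S.mul_mem (hS _) hx, by rw [desc, e, mul_assoc]⟩
  obtain ⟨x, hx, e⟩ := h1 (k + 1)
  obtain ⟨y, hy, e'⟩ := h2 k
  refine ⟨x * (half s k * y), S.mul_mem hx (S.mul_mem (half_mem hS _) hy), ?_⟩
  rw [half_succ' hc, e, half, e']
  simp only [mul_assoc]

theorem antihom_half (hc : ∀ i j, i + 1 < j → s i * s j = s j * s i) {f : G → G}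
    (f1 : f 1 = 1) (fm : ∀ x y, f (x * y) = f y * f x) (fs : ∀ i, f (s i) = s i) (k : ℕ) :
    f (half s k) = half s k := by
  have h : ∀ k, f (desc s k) = asc s k := by
    intro k
    induction k with
    | zero => exact f1
    | succ k ih => rw [desc, fm, ih, fs, asc]
  induction k with
  | zero => exact f1
  | succ k ih => rw [half, fm, ih, h, ← half_succ' hc, half]

end HalfTwist
end BraidMonoid

namespace BraidMonoid

/-! ### Inverting a central element -/

section Embedding

/-- A monoid with a central, left-cancellable element `z` embeds into a monoid in which `z`
becomes invertible. -/
theorem exists_embedding {M : Type} [Monoid M] {z : M} (hz : ∀ x, z * x = x * z)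
    (hcan : ∀ x y, z * x = z * y → x = y) :
    ∃ (L : Type) (_ : Monoid L) (f : M →* L), Function.Injective f ∧ IsUnit (f z) := by
  have hpow : ∀ (s : Submonoid.powers z) (x : M), (s : M) * x = x * s := by
    rintro ⟨_, k, rfl⟩ x
    exact ((show Commute z x from hz x).pow_left k).eq
  have hpc : ∀ (s : Submonoid.powers z) (x y : M), (s : M) * x = s * y → x = y := by
    rintro ⟨_, k, rfl⟩ x y h
    change z ^ k * x = z ^ k * y at h
    induction k with
    | zero => simpa using h
    | succ k ih => rw [pow_succ', mul_assoc, mul_assoc] at h; exact ih (hcan _ _ h)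
  let I : OreLocalization.OreSet (Submonoid.powers z) :=
    { ore_right_cancel := fun r₁ r₂ s h => ⟨s, by rw [hpow, hpow, h]⟩
      oreNum := fun r _ => r
      oreDenom := fun _ s => s
      ore_eq := fun r s => hpow s r }
  refine ⟨OreLocalization (Submonoid.powers z) M, inferInstance, OreLocalization.numeratorHom,
    ?_, OreLocalization.numerator_isUnit ⟨z, Submonoid.mem_powers z⟩⟩
  intro x y h
  obtain ⟨s, v, h1, h2⟩ := OreLocalization.oreDiv_eq_iff.1 h
  have h2' : (s : M) = v := by simpa using h2
  have h1' : (s : M) * y = v * x := h1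
  rw [← h2'] at h1'
  exact (hpc s _ _ h1').symm

end Embedding

/-! ### The positive braid monoid and its embedding in the braid group -/

section Braid

/-- The Coxeter graph of type `A`: a path. -/
def line (m : ℕ) (i j : Fin m) : Prop := (i : ℕ) + 1 = j ∨ (j : ℕ) + 1 = i

theorem line_symm (m : ℕ) (s t : Fin m) (h : line m s t) : line m t s := Or.symm h

theorem line_tri (m : ℕ) (s t u : Fin m) (h1 : line m s t) (h2 : line m t u)
    (h3 : line m s u) : False := by
  unfold line at *; omega

/-- The positive braid monoid. -/
abbrev BM (m : ℕ) := Mon (line m)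

/-- The generators of the braid monoid, indexed by `ℕ` with junk value `1`. -/
def genN (m : ℕ) (j : ℕ) : BM m := if h : j < m then gen (line m) ⟨j, h⟩ else 1

theorem genN_comm (m i j : ℕ) (h : i + 1 < j) : genN m i * genN m j = genN m j * genN m i := by
  unfold genN
  by_cases hj : j < m
  · have hi : i < m := by omega
    rw [dif_pos hj, dif_pos hi]
    have := comm (adj := line m) (line_symm m) (s := ⟨i, hi⟩) (t := ⟨j, hj⟩)
      (by simp; omega) (by simp [line]; omega) 1
    simpa using this
  · rw [dif_neg hj, one_mul, mul_one]

theorem genN_braid (m i : ℕ) (h : i + 1 < m) :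
    genN m i * genN m (i + 1) * genN m i = genN m (i + 1) * genN m i * genN m (i + 1) := by
  have hi : i < m := by omega
  unfold genN
  rw [dif_pos h, dif_pos hi]
  have := braid (adj := line m) (line_symm m) (s := ⟨i, hi⟩) (t := ⟨i + 1, h⟩)
      (by simp) (by simp [line]) 1
  simpa [mul_assoc] using this

variable {n : ℕ}

theorem σ_comm (i j : Fin (n - 1)) (h : (i : ℕ) + 1 < j) : (σ i * σ j : B n) = σ j * σ i := by
  have := PresentedGroup.one_of_mem (rels := braidRels (n - 1)) (Or.inl ⟨i, j, h, rfl⟩)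
  simp only [map_mul, map_inv] at this
  rw [mul_inv_eq_one, mul_inv_eq_iff_eq_mul] at this
  exact this

theorem σ_braid (i j : Fin (n - 1)) (h : (i : ℕ) + 1 = j) :
    (σ i * σ j * σ i : B n) = σ j * σ i * σ j := by
  have := PresentedGroup.one_of_mem (rels := braidRels (n - 1)) (Or.inr ⟨i, j, h, rfl⟩)
  simp only [map_mul, map_inv] at this
  rw [mul_inv_eq_one, mul_inv_eq_iff_eq_mul, mul_inv_eq_iff_eq_mul] at this
  exact this

theorem σ'_coe (i : Fin (n - 1)) : (σ' (i : ℕ) : B n) = σ i := by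
  unfold σ'; rw [dif_pos i.2]

theorem σ'_comm (i j : ℕ) (h : i + 1 < j) : (σ' i * σ' j : B n) = σ' j * σ' i := by
  by_cases hj : j < n - 1
  · exact (σ'_coe (n := n) ⟨i, by omega⟩) ▸ (σ'_coe (n := n) ⟨j, hj⟩) ▸ σ_comm _ _ h
  · have : (σ' j : B n) = 1 := dif_neg hj
    rw [this, one_mul, mul_one]

theorem σ'_braid (i : ℕ) (h : i + 1 < n - 1) :
    (σ' i * σ' (i + 1) * σ' i : B n) = σ' (i + 1) * σ' i * σ' (i + 1) :=
  (σ'_coe (n := n) ⟨i, by omega⟩) ▸ (σ'_coe (n := n) ⟨i + 1, h⟩) ▸ σ_braid _ _ rfl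

theorem σ_mem (i : Fin (n - 1)) : σ i ∈ P n := Submonoid.subset_closure ⟨i, rfl⟩

theorem σ'_mem (i : ℕ) : σ' i ∈ P n := by
  unfold σ'
  split
  · exact σ_mem _
  · exact (P n).one_mem

theorem Δ_eq_half : Δ n = half (σ' (n := n)) (n - 1) := by
  have h1 : ∀ k, (((List.range k).reverse).map (σ' (n := n))).prod = desc σ' k := by
    intro k
    induction k with
    | zero => rfl
    | succ k ih => rw [List.range_succ, List.reverse_append]; simpa [desc] using ih
  have h2 : ∀ m, ((List.range m).map
      (fun k => (((List.range (k + 1)).reverse).map (σ' (n := n))).prod)).prod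
        = half (σ' (n := n)) m := by
    intro m
    induction m with
    | zero => rfl
    | succ m ih => rw [List.range_succ, List.map_append, List.prod_append, ih, half, ← h1]; simp
  exact h2 _

/-- The canonical map from the braid monoid to the braid group. -/
def toB (n : ℕ) : BM (n - 1) →* B n :=
  (conGen (Rel (line (n - 1)))).lift (FreeMonoid.lift σ) <| by
    rw [Con.conGen_le]
    rintro _ _ ⟨s, t⟩
    change FreeMonoid.lift _ _ = FreeMonoid.lift _ _
    unfold compl
    by_cases h : s = t
    · simp [h]
    · have h' : ¬ t = s := fun e => h e.symm
      by_cases ha : line (n - 1) s t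
      · have hb := line_symm _ _ _ ha
        simp only [h, h', ha, hb, if_true, if_false, map_mul, FreeMonoid.lift_eval_of]
        rcases ha with ha | ha
        · simpa [mul_assoc] using σ_braid _ _ ha
        · simpa [mul_assoc] using (σ_braid _ _ ha).symm
      · have hb : ¬ line (n - 1) t s := fun e => ha (line_symm _ _ _ e)
        simp only [h, h', ha, hb, if_false, map_mul, FreeMonoid.lift_eval_of]
        unfold line at ha
        have : (s : ℕ) ≠ t := fun e => h (Fin.ext e)
        rcases Nat.lt_or_gt_of_ne this with hl | hl
        · exact σ_comm _ _ (by omega)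
        · exact (σ_comm _ _ (by omega)).symm

theorem toB_gen (i : Fin (n - 1)) : toB n (gen (line (n - 1)) i) = σ i :=
  FreeMonoid.lift_eval_of _ _

theorem mem_P_iff {x : B n} : x ∈ P n ↔ ∃ a, toB n a = x := by
  constructor
  · intro h
    have : P n ≤ MonoidHom.mrange (toB n) := by
      rw [P, Submonoid.closure_le]
      rintro _ ⟨i, rfl⟩
      exact ⟨_, toB_gen i⟩
    exact this h
  · rintro ⟨a, rfl⟩
    induction a using mon_induction with
    | h1 => rw [map_one]; exact (P n).one_mem
    | hs s a ih => rw [map_mul, toB_gen]; exact (P n).mul_mem (σ_mem s) ih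

/-- The braid monoid embeds in the braid group. The square of the half twist is central in the
monoid and a multiple of every generator, so the monoid embeds in a monoid in which all generators
are invertible; this embedding factors through the braid group. -/
theorem toB_injective : Function.Injective (toB n) := by
  obtain ⟨len, H⟩ := exists_hasTails (line_symm (n - 1)) (line_tri (n - 1))
  set D : BM (n - 1) := half (genN (n - 1)) (n - 1) with hD
  have hgen : ∀ i : Fin (n - 1), genN (n - 1) i = gen (line (n - 1)) i := fun i => dif_pos i.2
  have hcentral : ∀ x, D * D * x = x * (D * D) := by
    intro x
    induction x using mon_induction with
    | h1 => rw [mul_one, one_mul]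
    | hs s x ih =>
      have h1 := mul_half (genN_comm (n - 1)) (genN_braid (n - 1)) (i := s) (j := n - 1 - 1 - s)
        (k := n - 1) (by omega) le_rfl
      have h2 := mul_half (genN_comm (n - 1)) (genN_braid (n - 1)) (j := s) (i := n - 1 - 1 - s)
        (k := n - 1) (by omega) le_rfl
      rw [← hD, hgen] at h1 h2
      calc D * D * (gen (line (n - 1)) s * x)
          = D * (D * gen (line (n - 1)) s) * x := by simp only [mul_assoc]
        _ = (D * genN (n - 1) (n - 1 - 1 - s)) * D * x := by rw [← h2]; simp only [mul_assoc]
        _ = gen (line (n - 1)) s * (D * D * x) := by rw [← h1]; simp only [mul_assoc]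
        _ = gen (line (n - 1)) s * x * (D * D) := by rw [ih]; simp only [mul_assoc]
  obtain ⟨L, _, f, hf, hu⟩ := exists_embedding hcentral (fun x y h => H.cancel _ h)
  have hunit : ∀ i, IsUnit (f (gen (line (n - 1)) i)) := by
    intro i
    obtain ⟨x, -, hx⟩ := exists_half_eq_mul (genN_comm (n - 1)) (genN_braid (n - 1)) (S := ⊤)
      (fun _ => trivial) i.2 le_rfl
    rw [← hD, hgen] at hx
    have e1 : gen (line (n - 1)) i * (x * D) = D * D := by rw [← mul_assoc, ← hx]
    have e2 : x * D * gen (line (n - 1)) i = D * D := by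
      apply H.cancel (gen (line (n - 1)) i)
      rw [← mul_assoc, e1, hcentral]
    obtain ⟨w, hw⟩ := hu
    rw [isUnit_iff_exists_and_exists]
    refine ⟨⟨f (x * D) * ↑w⁻¹, ?_⟩, ⟨↑w⁻¹ * f (x * D), ?_⟩⟩
    · rw [← mul_assoc, ← map_mul, e1, ← hw, Units.mul_inv]
    · rw [mul_assoc, ← map_mul, e2, ← hw, Units.inv_mul]
  choose g hg using hunit
  have hg' : ∀ i j : Fin (n - 1), (i : ℕ) + 1 < j → g i * g j = g j * g i := by
    intro i j h
    ext
    simp only [Units.val_mul, hg, ← map_mul]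
    rw [← hgen, ← hgen, genN_comm _ _ _ h]
  have hb' : ∀ i j : Fin (n - 1), (i : ℕ) + 1 = j → g i * g j * g i = g j * g i * g j := by
    intro i j h
    ext
    simp only [Units.val_mul, hg, ← map_mul]
    rw [← hgen, ← hgen, ← h, genN_braid _ _ (by omega)]
  have hrel : ∀ r ∈ braidRels (n - 1), FreeGroup.lift g r = 1 := by
    rintro r (⟨i, j, h, rfl⟩ | ⟨i, j, h, rfl⟩)
    · simp only [map_mul, map_inv, FreeGroup.lift_apply_of]
      rw [mul_inv_eq_one, mul_inv_eq_iff_eq_mul, hg' i j h]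
    · simp only [map_mul, map_inv, FreeGroup.lift_apply_of]
      rw [mul_inv_eq_one, mul_inv_eq_iff_eq_mul, mul_inv_eq_iff_eq_mul, hb' i j h]
  have key : ∀ a, ((PresentedGroup.toGroup hrel (toB n a) : Lˣ) : L) = f a := by
    intro a
    induction a using mon_induction with
    | h1 => simp
    | hs s a ih =>
      rw [map_mul, map_mul, map_mul, Units.val_mul, ih, toB_gen, σ, PresentedGroup.toGroup.of, hg]
  intro a b h
  apply hf
  rw [← key, ← key, h]

end Braid
end BraidMonoid

namespace BraidMonoid

/-! ### Left divisibility in the braid group -/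

section Group

variable {n : ℕ}

theorem exists_deg (n : ℕ) : ∃ deg : B n → ℤ, (∀ x y, deg (x * y) = deg x + deg y) ∧
    ∀ i, deg (σ i) = 1 := by
  have h : ∀ r ∈ braidRels (n - 1),
      FreeGroup.lift (fun _ : Fin (n - 1) => Multiplicative.ofAdd (1 : ℤ)) r = 1 := by
    rintro r (⟨i, j, h, rfl⟩ | ⟨i, j, h, rfl⟩) <;> simp
  refine ⟨fun x => Multiplicative.toAdd (PresentedGroup.toGroup h x), fun x y => ?_, fun i => ?_⟩
  · beta_reduce; rw [map_mul, toAdd_mul]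
  · beta_reduce; rw [σ, PresentedGroup.toGroup.of, toAdd_ofAdd]

/-- The exponent sum of a braid. -/
noncomputable def deg (x : B n) : ℤ := (exists_deg n).choose x

theorem deg_mul (x y : B n) : deg (x * y) = deg x + deg y := (exists_deg n).choose_spec.1 x y

theorem deg_σ (i : Fin (n - 1)) : deg (σ i : B n) = 1 := (exists_deg n).choose_spec.2 i

theorem deg_one : deg (1 : B n) = 0 := by
  have := deg_mul (1 : B n) 1
  rw [mul_one] at this
  omega

theorem deg_inv (x : B n) : deg x⁻¹ = - deg x := by
  have := deg_mul x x⁻¹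
  rw [mul_inv_cancel, deg_one] at this
  omega

theorem deg_nonneg {x : B n} (hx : x ∈ P n) : 0 ≤ deg x := by
  induction hx using Submonoid.closure_induction with
  | mem x h => obtain ⟨i, rfl⟩ := h; rw [deg_σ]; omega
  | one => rw [deg_one]
  | mul x y _ _ h1 h2 => rw [deg_mul]; omega

theorem eq_one_or_mul_σ {x : B n} (hx : x ∈ P n) :
    x = 1 ∨ ∃ i, ∃ p ∈ P n, x = p * σ i := by
  induction hx using Submonoid.closure_induction with
  | mem x h => obtain ⟨i, rfl⟩ := h; exact Or.inr ⟨i, 1, (P n).one_mem, (one_mul _).symm⟩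
  | one => exact Or.inl rfl
  | mul x y hx hy h1 h2 =>
    rcases h2 with rfl | ⟨i, p, hp, rfl⟩
    · rwa [mul_one]
    · exact Or.inr ⟨i, x * p, (P n).mul_mem hx hp, (mul_assoc _ _ _).symm⟩

theorem eq_one_of_inv_mem {x : B n} (hx : x ∈ P n) (hx' : x⁻¹ ∈ P n) : x = 1 := by
  rcases eq_one_or_mul_σ hx with h | ⟨i, p, hp, rfl⟩
  · exact h
  · have h1 := deg_nonneg hx'
    have h2 := deg_nonneg hp
    rw [deg_inv, deg_mul, deg_σ] at h1
    omega

theorem mem_closure_σ (x : B n) : x ∈ Subgroup.closure (Set.range (σ (n := n))) := by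
  have := PresentedGroup.closure_range_of (braidRels (n - 1))
  change Subgroup.closure (Set.range (σ (n := n))) = ⊤ at this
  rw [this]; trivial

theorem Δ_mem : Δ n ∈ P n := by rw [Δ_eq_half]; exact half_mem σ'_mem _

theorem σ_mul_Δ (i : Fin (n - 1)) : ∃ j, (σ i * Δ n : B n) = Δ n * σ j := by
  refine ⟨⟨n - 1 - 1 - i, by omega⟩, ?_⟩
  rw [Δ_eq_half, ← σ'_coe, ← σ'_coe]
  exact mul_half σ'_comm σ'_braid (by simp; omega) le_rfl

theorem Δ_mul_σ (i : Fin (n - 1)) : ∃ j, (Δ n * σ i : B n) = σ j * Δ n := by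
  refine ⟨⟨n - 1 - 1 - i, by omega⟩, ?_⟩
  rw [Δ_eq_half, ← σ'_coe, ← σ'_coe]
  exact (mul_half σ'_comm σ'_braid (by simp; omega) le_rfl).symm

theorem inv_σ_mul_Δ_mem (i : Fin (n - 1)) : (σ i)⁻¹ * Δ n ∈ P n := by
  obtain ⟨x, hx, e⟩ := exists_half_eq_mul (σ'_comm (n := n)) σ'_braid σ'_mem i.2 le_rfl
  rw [Δ_eq_half, e, σ'_coe, inv_mul_cancel_left]
  exact hx

theorem conj_Δ_mem {x : B n} (hx : x ∈ P n) : (Δ n)⁻¹ * x * Δ n ∈ P n := by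
  induction hx using Submonoid.closure_induction with
  | mem x h =>
    obtain ⟨i, rfl⟩ := h
    obtain ⟨j, e⟩ := σ_mul_Δ i
    rw [mul_assoc, e, inv_mul_cancel_left]
    exact σ_mem j
  | one => rw [mul_one, inv_mul_cancel]; exact (P n).one_mem
  | mul x y _ _ h1 h2 =>
    have : (Δ n)⁻¹ * (x * y) * Δ n = ((Δ n)⁻¹ * x * Δ n) * ((Δ n)⁻¹ * y * Δ n) := by group
    rw [this]; exact (P n).mul_mem h1 h2

theorem conj_Δ_mem' {x : B n} (hx : x ∈ P n) : Δ n * x * (Δ n)⁻¹ ∈ P n := by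
  induction hx using Submonoid.closure_induction with
  | mem x h =>
    obtain ⟨i, rfl⟩ := h
    obtain ⟨j, e⟩ := Δ_mul_σ i
    rw [e, mul_inv_cancel_right]
    exact σ_mem j
  | one => rw [mul_one, mul_inv_cancel]; exact (P n).one_mem
  | mul x y _ _ h1 h2 =>
    have : Δ n * (x * y) * (Δ n)⁻¹ = (Δ n * x * (Δ n)⁻¹) * (Δ n * y * (Δ n)⁻¹) := by group
    rw [this]; exact (P n).mul_mem h1 h2

/-- Conjugation by powers of the half twist preserves positivity. -/
theorem conj_Δ_zpow_mem {x : B n} (hx : x ∈ P n) (k : ℤ) : (Δ n ^ k)⁻¹ * x * Δ n ^ k ∈ P n := by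
  induction k with
  | zero => simpa using hx
  | succ k ih =>
    have := conj_Δ_mem ih
    have e : (Δ n ^ ((k : ℤ) + 1))⁻¹ * x * Δ n ^ ((k : ℤ) + 1) =
      (Δ n)⁻¹ * ((Δ n ^ (k : ℤ))⁻¹ * x * Δ n ^ (k : ℤ)) * Δ n := by rw [zpow_add_one]; group
    rwa [e]
  | pred k ih =>
    have := conj_Δ_mem' ih
    have e : (Δ n ^ (-(k : ℤ) - 1))⁻¹ * x * Δ n ^ (-(k : ℤ) - 1) =
      Δ n * ((Δ n ^ (-(k : ℤ)))⁻¹ * x * Δ n ^ (-(k : ℤ))) * (Δ n)⁻¹ := by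
        rw [zpow_sub_one]; group
    rwa [e]

/-- Every braid divides a power of the half twist. -/
theorem exists_inv_mul_pow_mem (x : B n) : ∃ k : ℕ, x⁻¹ * Δ n ^ k ∈ P n := by
  have hmul : ∀ x y : B n, (∃ k : ℕ, x⁻¹ * Δ n ^ k ∈ P n) → (∃ k : ℕ, y⁻¹ * Δ n ^ k ∈ P n) →
      ∃ k : ℕ, (x * y)⁻¹ * Δ n ^ k ∈ P n := by
    rintro x y ⟨k, hk⟩ ⟨l, hl⟩
    refine ⟨k + l, ?_⟩
    have e : (x * y)⁻¹ * Δ n ^ (k + l) =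
        (y⁻¹ * Δ n ^ l) * ((Δ n ^ l)⁻¹ * (x⁻¹ * Δ n ^ k) * Δ n ^ l) := by rw [pow_add]; group
    rw [e]
    exact (P n).mul_mem hl (by simpa using conj_Δ_zpow_mem hk l)
  have hx := mem_closure_σ x
  induction hx using Subgroup.closure_induction'' with
  | one => exact ⟨0, by simp⟩
  | mem x h => obtain ⟨i, rfl⟩ := h; exact ⟨1, by rw [pow_one]; exact inv_σ_mul_Δ_mem i⟩
  | inv_mem x h => obtain ⟨i, rfl⟩ := h; exact ⟨0, by simpa using σ_mem i⟩
  | mul x y _ _ h1 h2 => exact hmul x y h1 h2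

/-- Greatest common left divisors of positive braids, among positive braids. -/
theorem exists_gcd_pos {x y : B n} (hx : x ∈ P n) (hy : y ∈ P n) :
    ∃ d ∈ P n, d⁻¹ * x ∈ P n ∧ d⁻¹ * y ∈ P n ∧
      ∀ e ∈ P n, e⁻¹ * x ∈ P n → e⁻¹ * y ∈ P n → e⁻¹ * d ∈ P n := by
  obtain ⟨len, H⟩ := exists_hasTails (line_symm (n - 1)) (line_tri (n - 1))
  have hdvd : ∀ a b, (toB n a)⁻¹ * toB n b ∈ P n ↔ a ∣ b := by
    intro a b
    constructor
    · intro h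
      obtain ⟨c, hc⟩ := mem_P_iff.1 h
      exact ⟨c, toB_injective (by rw [map_mul, hc, mul_inv_cancel_left])⟩
    · rintro ⟨c, rfl⟩
      rw [map_mul, inv_mul_cancel_left]
      exact mem_P_iff.2 ⟨c, rfl⟩
  obtain ⟨a, rfl⟩ := mem_P_iff.1 hx
  obtain ⟨b, rfl⟩ := mem_P_iff.1 hy
  obtain ⟨d, hda, hdb, hd⟩ := H.exists_gcd a b
  refine ⟨toB n d, mem_P_iff.2 ⟨d, rfl⟩, (hdvd _ _).2 hda, (hdvd _ _).2 hdb, ?_⟩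
  intro e he h1 h2
  obtain ⟨e, rfl⟩ := mem_P_iff.1 he
  exact (hdvd _ _).2 (hd e ((hdvd _ _).1 h1) ((hdvd _ _).1 h2))

/-- Greatest lower bounds for the left-divisibility order on the whole braid group. Multiplying on
the left by a large power of the half twist makes all braids in sight positive. -/
theorem exists_meet (x y : B n) : ∃ d : B n, d⁻¹ * x ∈ P n ∧ d⁻¹ * y ∈ P n ∧
    ∀ e, e⁻¹ * x ∈ P n → e⁻¹ * y ∈ P n → e⁻¹ * d ∈ P n := by
  -- every braid becomes positive after left multiplication by a positive braid
  have hpos : ∀ z : B n, ∃ p ∈ P n, p * z ∈ P n := by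
    intro z
    obtain ⟨k, hk⟩ := exists_inv_mul_pow_mem z⁻¹
    refine ⟨Δ n ^ k, (P n).pow_mem Δ_mem k, ?_⟩
    simpa [mul_assoc] using conj_Δ_zpow_mem hk (-k)
  obtain ⟨p, hp, hpx⟩ := hpos x
  obtain ⟨q, hq, hqy⟩ := hpos (p * y)
  obtain ⟨d, hd, hdx, hdy, hdm⟩ := exists_gcd_pos (x := q * (p * x)) (y := q * (p * y))
    ((P n).mul_mem hq hpx) hqy
  refine ⟨p⁻¹ * (q⁻¹ * d), by simpa [mul_assoc] using hdx, by simpa [mul_assoc] using hdy, ?_⟩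
  intro e h1 h2
  obtain ⟨a, ha, hae⟩ := hpos (q * (p * e))
  obtain ⟨g, hg, hgx, hgy, hgm⟩ := exists_gcd_pos (x := a * (q * (p * x)))
    (y := a * (q * (p * y))) ((P n).mul_mem ha ((P n).mul_mem hq hpx)) ((P n).mul_mem ha hqy)
  have h3 := hgm _ hae (by simpa [mul_assoc] using h1) (by simpa [mul_assoc] using h2)
  have h4 := hgm a ha (by simpa using (P n).mul_mem hq hpx) (by simpa using hqy)
  -- `g = a * g'` with `g'` a positive common divisor of `q * p * x` and `q * p * y`
  have h5 := hdm _ h4 (by simpa [mul_assoc] using hgx) (by simpa [mul_assoc] using hgy)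
  have := (P n).mul_mem h3 h5
  simpa [mul_assoc] using this

end Group
end BraidMonoid

namespace BraidMonoid

/-! ### Semilattices with shifts and an order-reversing bijection -/

section TwistedOrder

/-- A meet-semilattice with shifts `sh k` and an order-reversing bijection `θ` that inverts shifts,
such that there are minimal elements below each `z` with `θ z ≤ z`. For the braid group, ordered by
left divisibility, `sh k z = z * Δ ^ k` and `θ z = u⁻¹ * (rev z)⁻¹`. -/
structure TwistedOrder (α : Type*) [SemilatticeInf α] where
  /-- The shifts. -/
  sh : ℤ → α → α
  /-- The order-reversing bijection. -/
  θ : α → α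
  sh_zero : ∀ x, sh 0 x = x
  sh_add : ∀ a b x, sh (a + b) x = sh a (sh b x)
  sh_mono : ∀ k x y, x ≤ y → sh k x ≤ sh k y
  le_sh : ∀ k x, 0 ≤ k → x ≤ sh k x
  θ_le : ∀ x y, θ y ≤ θ x ↔ x ≤ y
  θ_surj : ∀ y, ∃ x, θ x = y
  θ_sh : ∀ k x, θ (sh k x) = sh (-k) (θ x)
  exists_min : ∀ z, θ z ≤ z → ∃ w ≤ z, Minimal (fun z => θ z ≤ z) w

namespace TwistedOrder

variable {α : Type*} [SemilatticeInf α] (T : TwistedOrder α)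

/-- The order relation up to a shift by `k`. -/
def L (k : ℤ) (x y : α) : Prop := x ≤ T.sh k y

variable {T} {k l m : ℤ} {x y z a b w : α}

theorem L_zero : T.L 0 x y ↔ x ≤ y := by rw [L, T.sh_zero]

theorem sh_le : T.sh k x ≤ y ↔ x ≤ T.sh (-k) y := by
  constructor
  · intro h
    have := T.sh_mono (-k) _ _ h
    rwa [← T.sh_add, neg_add_cancel, T.sh_zero] at this
  · intro h
    have := T.sh_mono k _ _ h
    rwa [← T.sh_add, add_neg_cancel, T.sh_zero] at this

theorem L_sh_left : T.L k (T.sh l x) y ↔ T.L (k - l) x y := by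
  rw [L, L, sh_le, ← T.sh_add, neg_add_eq_sub]

theorem L_sh_right : T.L k x (T.sh l y) ↔ T.L (k + l) x y := by
  rw [L, L, ← T.sh_add]

theorem L.refl (h : 0 ≤ k) : T.L k x x := T.le_sh k x h

theorem L.trans (h1 : T.L k x y) (h2 : T.L l y z) (h : k + l ≤ m) : T.L m x z := by
  have h3 : T.L (k + l) x z := by
    rw [L, T.sh_add]; exact le_trans h1 (T.sh_mono k _ _ h2)
  have h4 := T.le_sh (m - (k + l)) (T.sh (k + l) z) (by omega)
  rw [← T.sh_add, sub_add_cancel] at h4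
  exact le_trans h3 h4

theorem L.mono (h1 : T.L k x y) (h : k ≤ m) : T.L m x y :=
  h1.trans (L.refl le_rfl) (by omega)

theorem L.map (h : T.L k x y) : T.L k (T.θ y) (T.θ x) := by
  have := (T.θ_le _ _).2 h
  rwa [T.θ_sh, sh_le, neg_neg] at this

theorem L.inf (h1 : T.L k x a) (h2 : T.L k x b) : T.L k x (a ⊓ b) := by
  have h1' : T.sh (-k) x ≤ a := by rwa [sh_le, neg_neg]
  have h2' : T.sh (-k) x ≤ b := by rwa [sh_le, neg_neg]
  have := le_inf h1' h2'
  rwa [sh_le, neg_neg] at this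

theorem L.inf_left : T.L 0 (a ⊓ b) a := L_zero.2 inf_le_left

theorem L.inf_right : T.L 0 (a ⊓ b) b := L_zero.2 inf_le_right

/-- `θ` turns meets into joins. -/
theorem L.θ_inf (h1 : T.L k (T.θ a) w) (h2 : T.L k (T.θ b) w) : T.L k (T.θ (a ⊓ b)) w := by
  obtain ⟨c, hc⟩ := T.θ_surj (T.sh k w)
  rw [L, ← hc, T.θ_le] at h1 h2 ⊢
  exact le_inf h1 h2

theorem L.θθ_inf (h1 : T.L k w (T.θ (T.θ a))) (h2 : T.L k w (T.θ (T.θ b))) :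
    T.L k w (T.θ (T.θ (a ⊓ b))) := by
  obtain ⟨c, hc⟩ := T.θ_surj (T.sh (-k) w)
  rw [L, ← neg_neg k, ← sh_le, ← hc, T.θ_le] at h1 h2 ⊢
  have := L.θ_inf (T := T) (L_zero.2 h1) (L_zero.2 h2)
  exact L_zero.1 this

variable (T) in
/-- `θ ∘ θ` moves `z` by at most `r` shifts. -/
def S (r : ℤ) (z : α) : Prop := T.L r (T.θ (T.θ z)) z ∧ T.L r z (T.θ (T.θ z))

variable {r R R' : ℤ}

theorem S_of (h1 : T.L 0 (T.θ z) z) (h2 : T.L r z (T.θ z)) : T.S r z :=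
  ⟨h2.map.trans h1 (by omega), h2.trans h1.map (by omega)⟩

theorem S.inf (ha : T.S r a) (hb : T.S r b) : T.S r (a ⊓ b) :=
  ⟨(L.inf_left.map.map.trans ha.1 (by omega)).inf (L.inf_right.map.map.trans hb.1 (by omega)),
    L.θθ_inf (L.inf_left.trans ha.2 (by omega)) (L.inf_right.trans hb.2 (by omega))⟩

theorem S.map (ha : T.S r a) : T.S r (T.θ a) := ⟨ha.2.map, ha.1.map⟩

theorem S.sh (ha : T.S r a) : T.S r (T.sh k a) := by
  unfold S at *
  rw [T.θ_sh, T.θ_sh, neg_neg, L_sh_left, L_sh_right, L_sh_left, L_sh_right, sub_add_cancel]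
  simpa using ha

/-- One reduction step: replacing `z` by its meet with a shift of `θ z` keeps `θ z ≤ z` and
shortens the interval from `θ z` to `z`. -/
theorem reduce_step (hX : T.L 0 (T.θ z) z) (hS : T.S r z) (hz : T.L R z (T.θ z))
    (h1 : R ≤ 2 * R') (h2 : r ≤ R') (h0 : 0 ≤ R') :
    T.L 0 (T.θ (z ⊓ T.sh R' (T.θ z))) (z ⊓ T.sh R' (T.θ z)) ∧
      T.S r (z ⊓ T.sh R' (T.θ z)) ∧
      T.L R' (z ⊓ T.sh R' (T.θ z)) (T.θ (z ⊓ T.sh R' (T.θ z))) := by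
  refine ⟨L.θ_inf (L.inf hX ?_) (L.inf ?_ ?_), hS.inf hS.map.sh, ?_⟩
  · rw [L_sh_right]; exact L.refl (by omega)
  · rw [T.θ_sh, L_sh_left]; exact hS.1.mono (by omega)
  · rw [T.θ_sh, L_sh_left, L_sh_right]; exact hz.map.mono (by omega)
  · have h3 : T.L R' (z ⊓ T.sh R' (T.θ z)) (T.θ z) := by
      have := L.inf_right (T := T) (a := z) (b := T.sh R' (T.θ z))
      rw [L_sh_right] at this
      exact this.mono (by omega)
    exact h3.trans (L.inf_left.map) (by omega)

theorem reduce (hr : 1 ≤ r) (j : ℕ) : ∀ z, T.L 0 (T.θ z) z → T.S r z → T.L (r + j) z (T.θ z) →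
    ∃ w ≤ z, T.L 0 (T.θ w) w ∧ T.L r w (T.θ w) := by
  induction j with
  | zero => intro z hX _ hz; exact ⟨z, le_rfl, hX, hz.mono (by simp)⟩
  | succ j ih =>
    intro z hX hS hz
    obtain ⟨h1, h2, h3⟩ := reduce_step (R' := r + j) hX hS hz (by push_cast; omega) (by omega)
      (by omega)
    obtain ⟨w, hw, h⟩ := ih _ h1 h2 h3
    exact ⟨w, hw.trans inf_le_left, h⟩

variable (T) in
/-- The minimal elements of `{z | θ z ≤ z}` with `z ≤ sh r (θ z)`. -/
def Good (r : ℤ) (z : α) : Prop := Minimal (fun z => T.θ z ≤ z) z ∧ T.L r z (T.θ z)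

theorem exists_good (hr : 1 ≤ r) (j : ℕ) (hX : T.L 0 (T.θ z) z) (hS : T.S r z)
    (hz : T.L (r + j) z (T.θ z)) : ∃ w ≤ z, T.Good r w := by
  obtain ⟨w, hwz, hXw, hYw⟩ := reduce hr j z hX hS hz
  obtain ⟨w', hw', hmin⟩ := T.exists_min w (L_zero.1 hXw)
  have h : T.L 0 w' w := L_zero.2 hw'
  exact ⟨w', hw'.trans hwz, hmin, (h.trans hYw (zero_add r).le).trans h.map (by omega)⟩

/-- For a minimal `z`, a bound `w ≤ sh k z` implies the symmetric one: otherwise `z ⊓ sh k w` would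
be a smaller element of the same set. -/
theorem dist_symm (hk : 0 ≤ k) (hz : Minimal (fun z => T.θ z ≤ z) z) (hw : T.L 0 (T.θ w) w)
    (h : T.L k w z) : T.L k z w := by
  have hX : T.L 0 (T.θ z) z := L_zero.2 hz.1
  have ha : T.θ (z ⊓ T.sh k w) ≤ z ⊓ T.sh k w := by
    rw [← L_zero]
    refine L.θ_inf (L.inf hX ?_) (L.inf ?_ ?_)
    · rw [L_sh_right]; exact h.map.trans hw (by omega)
    · rw [T.θ_sh, L_sh_left]; exact hw.trans h (by omega)
    · rw [T.θ_sh, L_sh_left, L_sh_right]; exact hw.mono (by omega)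
  exact (hz.2 ha inf_le_left).trans inf_le_right

/-- Any two good elements are joined by a chain of good elements with consecutive distances at
most one: two good elements at distance `m ≥ 2` have a good element at distance at most `m - 1`
from both, found below `sh (m - 1) (z₁ ⊓ z₂)`. -/
theorem chain (hr : 1 ≤ r) (m : ℕ) : ∀ z₁ z₂, T.Good r z₁ → T.Good r z₂ → T.L m z₁ z₂ →
    T.L m z₂ z₁ → Relation.ReflTransGen
      (fun a b => T.Good r b ∧ T.L 1 a b ∧ T.L 1 b a) z₁ z₂ := by
  induction m using Nat.strong_induction_on with
  | _ m ih =>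
    intro z₁ z₂ g1 g2 h12 h21
    rcases Nat.lt_or_ge m 2 with hm | hm
    · exact Relation.ReflTransGen.single ⟨g2, h12.mono (by omega), h21.mono (by omega)⟩
    obtain ⟨h, rfl⟩ : ∃ h : ℕ, m = h + 1 := ⟨m - 1, by omega⟩
    push_cast at h12 h21
    have X1 : T.L 0 (T.θ z₁) z₁ := L_zero.2 g1.1.1
    have X2 : T.L 0 (T.θ z₂) z₂ := L_zero.2 g2.1.1
    have l1 : T.L 0 (z₁ ⊓ z₂) z₁ := L.inf_left
    have l2 : T.L 0 (z₁ ⊓ z₂) z₂ := L.inf_right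
    have XU : T.L 0 (T.θ (T.sh h (z₁ ⊓ z₂))) (T.sh h (z₁ ⊓ z₂)) := by
      rw [T.θ_sh, L_sh_left, L_sh_right]
      refine L.θ_inf (L.inf ?_ ?_) (L.inf ?_ ?_)
      · exact X1.mono (by omega)
      · exact X1.trans h12 (by omega)
      · exact X2.trans h21 (by omega)
      · exact X2.mono (by omega)
    have SU : T.S r (T.sh h (z₁ ⊓ z₂)) := ((S_of X1 g1.2).inf (S_of X2 g2.2)).sh
    have YU : T.L (r + (2 * h : ℕ)) (T.sh h (z₁ ⊓ z₂)) (T.θ (T.sh h (z₁ ⊓ z₂))) := by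
      rw [T.θ_sh, L_sh_left, L_sh_right]
      exact (l1.trans g1.2 le_rfl).trans l1.map (by push_cast; omega)
    obtain ⟨z₃, h3, g3⟩ := exists_good hr _ XU SU YU
    have d3 : T.L 0 z₃ (T.sh h (z₁ ⊓ z₂)) := L_zero.2 h3
    rw [L_sh_right] at d3
    have d31 : T.L h z₃ z₁ := d3.trans l1 (by omega)
    have d32 : T.L h z₃ z₂ := d3.trans l2 (by omega)
    have X3 : T.L 0 (T.θ z₃) z₃ := L_zero.2 g3.1.1
    exact (ih h (by omega) z₁ z₃ g1 g3 (dist_symm (by omega) g1.1 X3 d31) d31).trans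
      (ih h (by omega) z₃ z₂ g3 g2 d32 (dist_symm (by omega) g2.1 X3 d32))

end TwistedOrder

end TwistedOrder
end BraidMonoid

namespace BraidMonoid

/-! ### Positions in a twisted conjugacy class -/

section Twisted

variable {n : ℕ}

/-- The left-divisibility order on the braid group: `x ≤ y` when `x⁻¹ * y` is positive. -/
noncomputable instance braidLattice (n : ℕ) : SemilatticeInf (B n) where
  le x y := x⁻¹ * y ∈ P n
  le_refl x := by rw [inv_mul_cancel]; exact (P n).one_mem
  le_trans x y z h1 h2 := by simpa [mul_assoc] using (P n).mul_mem h1 h2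
  le_antisymm x y h1 h2 := by
    have := eq_one_of_inv_mem h1 (by simpa using h2)
    exact inv_mul_eq_one.1 this
  inf x y := (exists_meet x y).choose
  inf_le_left x y := (exists_meet x y).choose_spec.1
  inf_le_right x y := (exists_meet x y).choose_spec.2.1
  le_inf e x y h1 h2 := (exists_meet x y).choose_spec.2.2 e h1 h2

theorem le_def {x y : B n} : x ≤ y ↔ x⁻¹ * y ∈ P n := Iff.rfl

/-- `rev` is the anti-automorphism of the braid group fixing the generators. -/
structure IsRev (rev : B n → B n) : Prop where
  mul : ∀ x y, rev (x * y) = rev y * rev x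
  gen : ∀ i, rev (σ i) = σ i

namespace IsRev

variable {rev : B n → B n}

theorem one (hr : IsRev rev) : rev 1 = 1 := by
  have := hr.mul 1 1
  rw [mul_one] at this
  exact (mul_eq_left.1 this.symm)

theorem inv (hr : IsRev rev) (x : B n) : rev x⁻¹ = (rev x)⁻¹ := by
  rw [eq_inv_iff_mul_eq_one, ← hr.mul, mul_inv_cancel, hr.one]

theorem rev_rev (hr : IsRev rev) (x : B n) : rev (rev x) = x := by
  have hx := mem_closure_σ x
  induction hx using Subgroup.closure_induction with
  | mem x h => obtain ⟨i, rfl⟩ := h; rw [hr.gen, hr.gen]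
  | one => rw [hr.one, hr.one]
  | mul x y _ _ h1 h2 => rw [hr.mul, hr.mul, h1, h2]
  | inv x _ h => rw [hr.inv, hr.inv, h]

theorem deg_rev (hr : IsRev rev) (x : B n) : deg (rev x) = deg x := by
  have hx := mem_closure_σ x
  induction hx using Subgroup.closure_induction with
  | mem x h => obtain ⟨i, rfl⟩ := h; rw [hr.gen]
  | one => rw [hr.one]
  | mul x y _ _ h1 h2 => rw [hr.mul, deg_mul, deg_mul, h1, h2, add_comm]
  | inv x _ h => rw [hr.inv, deg_inv, deg_inv, h]

theorem mem (hr : IsRev rev) {x : B n} (hx : x ∈ P n) : rev x ∈ P n := by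
  induction hx using Submonoid.closure_induction with
  | mem x h => obtain ⟨i, rfl⟩ := h; rw [hr.gen]; exact σ_mem i
  | one => rw [hr.one]; exact (P n).one_mem
  | mul x y _ _ h1 h2 => rw [hr.mul]; exact (P n).mul_mem h2 h1

theorem mem_iff (hr : IsRev rev) {x : B n} : rev x ∈ P n ↔ x ∈ P n :=
  ⟨fun h => hr.rev_rev x ▸ hr.mem h, hr.mem⟩

theorem Δ_zpow (hr : IsRev rev) (k : ℤ) : rev (Δ n ^ k) = Δ n ^ k := by
  have h0 : rev (Δ n) = Δ n := by
    rw [Δ_eq_half]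
    refine antihom_half σ'_comm hr.one hr.mul (fun i => ?_) _
    unfold σ'
    split
    · exact hr.gen _
    · exact hr.one
  induction k with
  | zero => rw [zpow_zero, hr.one]
  | succ k ih => rw [zpow_add_one, hr.mul, ih, h0, ← zpow_one_add, ← zpow_add_one, add_comm]
  | pred k ih =>
    rw [zpow_sub_one, hr.mul, ih, hr.inv, h0, ← zpow_neg_one, ← zpow_add, ← zpow_add, add_comm]

end IsRev

/-- The braid reached from `u` by the twisted conjugation by `z`. -/
def val (rev : B n → B n) (u z : B n) : B n := rev z * u * z

variable {rev : B n → B n}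

theorem val_mul (hr : IsRev rev) (u z c : B n) : val rev u (z * c) = rev c * val rev u z * c := by
  simp only [val, hr.mul, mul_assoc]

theorem deg_val (hr : IsRev rev) (u z : B n) : deg (val rev u z) = deg u + 2 * deg z := by
  rw [val, deg_mul, deg_mul, hr.deg_rev]; ring

variable {u : B n}

theorem θ_le_iff {z : B n} : u⁻¹ * (rev z)⁻¹ ≤ z ↔ val rev u z ∈ P n := by
  rw [le_def, mul_inv_rev, inv_inv, inv_inv, val]

/-- The positions of positive palindromic-free braids are exactly the minimal positions of positive
braids. -/
theorem minimal_iff (hr : IsRev rev) {z : B n} : Minimal (fun z => u⁻¹ * (rev z)⁻¹ ≤ z) z ↔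
    val rev u z ∈ P n ∧ PalFree (val rev u z) := by
  have hi : ∀ (z : B n) i, val rev u (z * (σ i)⁻¹) = (σ i)⁻¹ * val rev u z * (σ i)⁻¹ := by
    intro z i
    rw [val_mul hr, hr.inv, hr.gen]
  constructor
  · intro h
    refine ⟨θ_le_iff.1 h.1, fun i hmem => ?_⟩
    rw [← hi, ← θ_le_iff] at hmem
    have := h.2 hmem (by simpa [le_def] using σ_mem i)
    have := deg_nonneg this
    rw [inv_mul_cancel_left, deg_inv, deg_σ] at this
    omega
  · rintro ⟨h1, h2⟩
    refine ⟨θ_le_iff.2 h1, fun w hw hwz => ?_⟩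
    have hw := θ_le_iff.1 hw
    rw [le_def] at hwz
    rcases eq_one_or_mul_σ hwz with h | ⟨i, p, hp, e⟩
    · rw [inv_mul_eq_one] at h
      exact h ▸ le_rfl
    · exfalso
      apply h2 i
      have e' : z * (σ i)⁻¹ = w * p := by
        rw [mul_inv_eq_iff_eq_mul, mul_assoc, ← e, mul_inv_cancel_left]
      rw [← hi, e', val_mul hr]
      exact (P n).mul_mem ((P n).mul_mem (hr.mem hp) hw) hp

theorem exists_minimal (hr : IsRev rev) (k : ℕ) :
    ∀ z : B n, deg (val rev u z) ≤ k → u⁻¹ * (rev z)⁻¹ ≤ z →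
    ∃ w ≤ z, Minimal (fun z => u⁻¹ * (rev z)⁻¹ ≤ z) w := by
  induction k using Nat.strong_induction_on with
  | _ k ih =>
    intro z hk hz
    by_cases hm : Minimal (fun z => u⁻¹ * (rev z)⁻¹ ≤ z) z
    · exact ⟨z, le_rfl, hm⟩
    · have : ∃ w, u⁻¹ * (rev w)⁻¹ ≤ w ∧ w ≤ z ∧ ¬ z ≤ w := by
        by_contra! hcon
        exact hm ⟨hz, fun w hw hwz => hcon w hw hwz⟩
      obtain ⟨w, hw, hwz, hne⟩ := this
      have hd : 1 ≤ deg (w⁻¹ * z) := by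
        rcases eq_one_or_mul_σ hwz with h | ⟨i, p, hp, e⟩
        · rw [inv_mul_eq_one] at h
          exact (hne (h ▸ le_rfl)).elim
        · rw [e, deg_mul, deg_σ]
          have := deg_nonneg hp
          omega
      rw [deg_mul, deg_inv] at hd
      have h0 := deg_nonneg (θ_le_iff.1 hw)
      rw [deg_val hr] at hk h0
      obtain ⟨w', h1, h2⟩ := ih (k - 1) (by omega) w (by rw [deg_val hr]; omega) hw
      exact ⟨w', h1.trans hwz, h2⟩

/-- The twisted order attached to the twisted conjugacy class of `u`. -/
noncomputable def twist (hr : IsRev rev) (u : B n) : TwistedOrder (B n) where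
  sh k z := z * Δ n ^ k
  θ z := u⁻¹ * (rev z)⁻¹
  sh_zero x := by simp
  sh_add a b x := by rw [mul_assoc, ← zpow_add, add_comm]
  sh_mono k x y h := by
    rw [le_def] at h ⊢
    have := conj_Δ_zpow_mem h k
    rwa [mul_inv_rev, mul_assoc, ← mul_assoc x⁻¹, ← mul_assoc]
  le_sh k x h := by
    rw [le_def, inv_mul_cancel_left]
    lift k to ℕ using h
    rw [zpow_natCast]
    exact (P n).pow_mem Δ_mem k
  θ_le x y := by
    rw [le_def, le_def, ← hr.mem_iff (x := x⁻¹ * y), hr.mul, hr.inv]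
    simp [mul_assoc]
  θ_surj y := ⟨rev (u * y)⁻¹, by rw [hr.rev_rev]; group⟩
  θ_sh k x := by rw [hr.mul, hr.Δ_zpow, zpow_neg]; group
  exists_min z hz := exists_minimal hr (deg (val rev u z)).toNat z (Int.self_le_toNat _) hz

theorem twist_L {hr : IsRev rev} {k : ℤ} {x y : B n} :
    (twist hr u).L k x y ↔ x⁻¹ * (y * Δ n ^ k) ∈ P n := Iff.rfl

theorem twist_good (hr : IsRev rev) {r : ℤ} {z : B n} : (twist hr u).Good r z ↔
    (val rev u z ∈ P n ∧ PalFree (val rev u z)) ∧ (val rev u z)⁻¹ * Δ n ^ r ∈ P n := by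
  refine and_congr (minimal_iff hr) ?_
  rw [twist_L]
  simp [twist, val, mul_assoc]

/-- Positions at distance at most one carry simply twisted conjugated braids: both are moved by a
simple element to the meet of their shifts. -/
theorem exists_simple (hr : IsRev rev) {a b : B n} (h1 : (twist hr u).L 1 a b)
    (h2 : (twist hr u).L 1 b a) :
    ∃ s t : B n, Simple s ∧ Simple t ∧
      rev s * val rev u a * s = rev t * val rev u b * t := by
  rw [twist_L, zpow_one] at h1 h2
  have hle : ∀ x : B n, x ≤ x * Δ n := fun x => by
    rw [le_def, inv_mul_cancel_left]; exact Δ_mem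
  set F := (a * Δ n) ⊓ (b * Δ n) with hF
  have ha : a ≤ F := le_inf (hle a) h1
  have hb : b ≤ F := le_inf h2 (hle b)
  have ha' : F ≤ a * Δ n := inf_le_left
  have hb' : F ≤ b * Δ n := inf_le_right
  rw [le_def] at ha hb ha' hb'
  refine ⟨a⁻¹ * F, b⁻¹ * F, ⟨ha, by simpa [mul_assoc] using ha'⟩,
    ⟨hb, by simpa [mul_assoc] using hb'⟩, ?_⟩
  rw [← val_mul hr, ← val_mul hr, mul_inv_cancel_left, mul_inv_cancel_left]

end Twisted

/-! ### Canonical length of palindromic-free braids -/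

section Length

variable {n : ℕ}

theorem eq_Δ_of_palFree {x : B n} (hpf : PalFree x) (h : (Δ n)⁻¹ * x ∈ P n) : x = Δ n := by
  rcases eq_one_or_mul_σ h with e | ⟨i, p, hp, e⟩
  · exact (inv_mul_eq_one.1 e).symm
  · exfalso
    apply hpf i
    have e' : x = Δ n * (p * σ i) := by rw [← e, mul_inv_cancel_left]
    have : (σ i)⁻¹ * x * (σ i)⁻¹ = (σ i)⁻¹ * Δ n * p := by rw [e']; group
    rw [this]
    exact (P n).mul_mem (inv_σ_mul_Δ_mem i) hp

theorem Δ_zpow_mem {k : ℤ} (h : 0 ≤ k) : Δ n ^ k ∈ P n := by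
  lift k to ℕ using h
  rw [zpow_natCast]
  exact (P n).pow_mem Δ_mem k

/-- A palindromic-free positive braid is `Δ`, or its canonical length is witnessed from `Δ ^ 0`. -/
theorem lenLE_cases {x : B n} (hpf : PalFree x) {r : ℕ} (h : lenLE x r) :
    x = Δ n ∨ x⁻¹ * Δ n ^ (r : ℤ) ∈ P n := by
  obtain ⟨p, h1, h2⟩ := h
  rcases le_or_gt p 0 with hp | hp
  · right
    have e : x⁻¹ * Δ n ^ (r : ℤ) = x⁻¹ * Δ n ^ (p + (r : ℤ)) * Δ n ^ (-p) := by
      rw [mul_assoc, ← zpow_add]; congr 2; ring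
    rw [e]
    exact (P n).mul_mem h2 (Δ_zpow_mem (by omega))
  · left
    apply eq_Δ_of_palFree hpf
    have e : (Δ n)⁻¹ * x = Δ n ^ (p - 1) * (Δ n ^ (-p) * x) := by
      rw [← mul_assoc, ← zpow_add, ← zpow_neg_one]; congr 2; ring
    rw [e]
    exact (P n).mul_mem (Δ_zpow_mem (by omega)) h1

theorem mem_of_lenLE {x : B n} (hpf : PalFree x) {r : ℕ} (hr : 1 ≤ r) (h : lenLE x r) :
    x⁻¹ * Δ n ^ (r : ℤ) ∈ P n := by
  rcases lenLE_cases hpf h with rfl | h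
  · rw [← zpow_neg_one, ← zpow_add]
    exact Δ_zpow_mem (by omega)
  · exact h

theorem Δ_eq_half_of {k : ℕ} (h : n - 1 = k) : Δ n = half (σ' (n := n)) k := by
  subst h; exact Δ_eq_half

/-- A palindromic-free `Δ` with even exponent sum is trivial: palindromic-freeness leaves at most one
generator, and `Δ` has exponent sum one if there is exactly one. -/
theorem Δ_eq_one (hpf : PalFree (Δ n)) (hd : Even (deg (Δ n))) : Δ n = 1 := by
  rcases Nat.lt_or_ge (n - 1) 2 with h | h
  · obtain h0 | h0 : n - 1 = 0 ∨ n - 1 = 1 := by omega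
    · exact Δ_eq_half_of h0
    · have e : Δ n = σ ⟨0, by omega⟩ := by
        rw [Δ_eq_half_of h0, ← σ'_coe]
        simp [half, desc]
      rw [e, deg_σ] at hd
      simp at hd
  · exfalso
    obtain ⟨x, hx, e⟩ := exists_half_eq_mul_mul (σ'_comm (n := n)) σ'_mem (n - 1 - 2)
    rw [← Δ_eq_half_of (show n - 1 = n - 1 - 2 + 2 by omega),
      show (σ' 0 : B n) = σ ⟨0, by omega⟩ from dif_pos (by omega)] at e
    apply hpf ⟨0, by omega⟩
    rw [e]
    simpa [mul_assoc] using hx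

end Length

/-! ### The chain -/

theorem exists_chain_of_reflTransGen {α : Type*} {R : α → α → Prop} {a b : α}
    (h : Relation.ReflTransGen R a b) :
    ∃ (k : ℕ) (f : ℕ → α), f 0 = a ∧ f k = b ∧ ∀ i < k, R (f i) (f (i + 1)) := by
  induction h using Relation.ReflTransGen.head_induction_on with
  | refl => exact ⟨0, fun _ => b, rfl, rfl, by omega⟩
  | @head a c hac _ ih =>
    obtain ⟨k, f, h0, hk, hf⟩ := ih
    refine ⟨k + 1, fun i => Nat.casesOn i a f, rfl, hk, ?_⟩
    intro i hi
    cases i with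
    | zero => simpa [h0] using hac
    | succ i => exact hf i (by omega)

end BraidMonoid

open BraidMonoid in
/-- chains of simple ε-twisted conjugations at the minimal canonical length. -/
theorem chain_at_minimal_length (n : ℕ)
    (rev : B n → B n)
    (hrev_mul : ∀ x y : B n, rev (x * y) = rev y * rev x)
    (hrev_gen : ∀ i : Fin (n - 1), rev (σ i) = σ i)
    (u v : B n) (r : ℕ)
    (hu_pos : u ∈ P n) (hu_pf : PalFree u)
    (hv_pos : v ∈ P n) (hv_pf : PalFree v)
    (htc : ∃ c : B n, v = rev c * u * c)
    (hlu : lenEQ u r) (hlv : lenEQ v r)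
    (hmin : ∀ z : B n, z ∈ P n → PalFree z → (∃ c : B n, z = rev c * u * c) →
      1 ≤ r → ¬ lenLE z (r - 1)) :
    ∃ (k : ℕ) (w : ℕ → B n),
      w 0 = u ∧ w k = v ∧
      (∀ i ≤ k, w i ∈ P n ∧ PalFree (w i) ∧ lenEQ (w i) r) ∧
      (∀ i < k, ∃ a b : B n, Simple a ∧ Simple b ∧
        rev a * w i * a = rev b * w (i + 1) * b) := by
  have hr : IsRev rev := ⟨hrev_mul, hrev_gen⟩
  obtain ⟨c, hc⟩ := htc
  change v = val rev u c at hc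
  rcases Nat.eq_zero_or_pos r with rfl | hr1
  · -- canonical length zero: `u` and `v` both lie in `{1, Δ}`, and they agree by parity
    have h1 : ∀ x : B n, x ∈ P n → PalFree x → lenLE x 0 → x = Δ n ∨ x = 1 := by
      intro x hx hpf hl
      refine (lenLE_cases hpf hl).imp_right fun h => eq_one_of_inv_mem hx (by simpa using h)
    have hd := deg_val hr u c
    rw [← hc] at hd
    have huv : u = v := by
      rcases h1 u hu_pos hu_pf hlu.1 with eu | eu <;> rcases h1 v hv_pos hv_pf hlv.1 with ev | ev
      · rw [eu, ev]
      · rw [eu, ev, deg_one] at hd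
        rw [eu, ev, Δ_eq_one (eu ▸ hu_pf) ⟨- deg c, by omega⟩]
      · rw [eu, ev, deg_one] at hd
        rw [eu, ev, Δ_eq_one (ev ▸ hv_pf) ⟨deg c, by omega⟩]
      · rw [eu, ev]
    exact ⟨0, fun _ => u, rfl, huv, fun _ _ => ⟨hu_pos, hu_pf, hlu⟩, by omega⟩
  · have hval1 : val rev u 1 = u := by simp [val, hr.one]
    have g1 : (twist hr u).Good r 1 := by
      rw [twist_good, hval1]
      exact ⟨⟨hu_pos, hu_pf⟩, mem_of_lenLE hu_pf hr1 hlu.1⟩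
    have gc : (twist hr u).Good r c := by
      rw [twist_good, ← hc]
      exact ⟨⟨hv_pos, hv_pf⟩, mem_of_lenLE hv_pf hr1 hlv.1⟩
    obtain ⟨m, hm⟩ := exists_inv_mul_pow_mem c
    have d1 : (twist hr u).L m c 1 := by rw [twist_L, one_mul, zpow_natCast]; exact hm
    have d2 := TwistedOrder.dist_symm (Int.natCast_nonneg m) g1.1
      (TwistedOrder.L_zero.2 gc.1.1) d1
    obtain ⟨k, f, h0, hk, hf⟩ := exists_chain_of_reflTransGen
      (TwistedOrder.chain (by exact_mod_cast hr1) m 1 c g1 gc d2 d1)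
    have hgood : ∀ i ≤ k, (twist hr u).Good r (f i) := by
      intro i hi
      cases i with
      | zero => rw [h0]; exact g1
      | succ i => exact (hf i hi).1
    refine ⟨k, fun i => val rev u (f i), ?_, ?_, ?_, ?_⟩
    · beta_reduce; rw [h0, hval1]
    · beta_reduce; rw [hk, hc]
    · intro i hi
      obtain ⟨⟨hp, hpf⟩, hl⟩ := (twist_good hr).1 (hgood i hi)
      exact ⟨hp, hpf, ⟨0, by simpa using hp, by simpa using hl⟩,
        hmin _ hp hpf ⟨f i, rfl⟩⟩
    · intro i hi
      exact exists_simple hr (hf i hi).2.1 (hf i hi).2.2
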